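/- arXiv:0903.4558 — 12 statements merged into one kernel-verified Lean document; each statement's English description precedes it below -/
import Mathlib

section
/- Let X be a complex Banach space and let T be a bounded linear operator on X. If T is norm-unimodal, then T (as a dynamical system on X with the metric d(x,y) = ‖x − y‖) is distributionally chaotic. -/
open Filter Topology MeasureTheory
open scoped Classical ENNReal

noncomputable def distFreq {X : Type*} [MetricSpace X] (f : X → X) (x y : X) (τ : ℝ) (n : ℕ) : ℝ :=
  (((Finset.range n).filter fun i => dist (f^[i] x) (f^[i] y) < τ).card : ℝ) / n

def DistributionallyChaoticPair {X : Type*} [MetricSpace X] (f : X → X) (x y : X) : Prop :=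
  (∀ τ : ℝ, 0 < τ → Filter.limsup (distFreq f x y τ) Filter.atTop = 1) ∧
  (∃ ε : ℝ, 0 < ε ∧ Filter.liminf (distFreq f x y ε) Filter.atTop = 0)

def DistributionallyChaotic {X : Type*} [MetricSpace X] (f : X → X) : Prop :=
  ∃ Λ : Set X, ¬Λ.Countable ∧
    ∀ x ∈ Λ, ∀ y ∈ Λ, x ≠ y → DistributionallyChaoticPair f x y

def LiYorkePair {X : Type*} [MetricSpace X] (f : X → X) (x y : X) : Prop :=
  0 < Filter.limsup (fun n => edist (f^[n] x) (f^[n] y)) Filter.atTop ∧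
  Filter.liminf (fun n => edist (f^[n] x) (f^[n] y)) Filter.atTop = 0

def LiYorkeChaotic {X : Type*} [MetricSpace X] (f : X → X) : Prop :=
  ∃ Γ : Set X, ¬Γ.Countable ∧ ∀ x ∈ Γ, ∀ y ∈ Γ, x ≠ y → LiYorkePair f x y

def NormUnimodal {X : Type*} [NormedAddCommGroup X] [NormedSpace ℂ X] (T : X →L[ℂ] X) : Prop :=
  ∃ r : ℝ, 1 < r ∧ ∀ m : ℕ, ∃ x : X, x ≠ 0 ∧
    Filter.Tendsto (fun k => ‖(T ^ k) x‖) Filter.atTop (nhds 0) ∧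
    ∀ i : ℕ, 1 ≤ i → i ≤ m → r ^ i * ‖x‖ ≤ ‖(T ^ i) x‖

theorem aux_limsup (g : ℕ → ℝ) (h0 : ∀ n, 0 ≤ g n) (h1 : ∀ n, g n ≤ 1)
    (h : ∀ η : ℝ, 0 < η → ∃ᶠ n in atTop, 1 - η ≤ g n) : limsup g atTop = 1 := by
  have hb : IsBoundedUnder (· ≤ ·) atTop g := isBoundedUnder_of ⟨1, h1⟩
  have hbd : IsBoundedUnder (· ≥ ·) atTop g := isBoundedUnder_of ⟨0, h0⟩
  apply le_antisymm
  · exact limsup_le_of_le hbd.isCoboundedUnder_le (Eventually.of_forall h1)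
  · apply le_of_forall_pos_sub_le
    intro η hη
    exact le_limsup_of_frequently_le (h η hη) hb

theorem aux_liminf (g : ℕ → ℝ) (h0 : ∀ n, 0 ≤ g n) (h1 : ∀ n, g n ≤ 1)
    (h : ∀ η : ℝ, 0 < η → ∃ᶠ n in atTop, g n ≤ η) : liminf g atTop = 0 := by
  have hb : IsBoundedUnder (· ≤ ·) atTop g := isBoundedUnder_of ⟨1, h1⟩
  have hbd : IsBoundedUnder (· ≥ ·) atTop g := isBoundedUnder_of ⟨0, h0⟩
  apply le_antisymm
  · apply le_of_forall_pos_le_add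
    intro η hη
    rw [zero_add]
    exact liminf_le_of_frequently_le (h η hη) hbd
  · exact le_liminf_of_le hb.isCoboundedUnder_ge (Eventually.of_forall h0)

theorem aux_freq_nonneg {X : Type*} [MetricSpace X] (f : X → X) (x y : X) (τ : ℝ) (n : ℕ) :
    0 ≤ distFreq f x y τ n := by
  unfold distFreq; positivity

theorem aux_freq_le {X : Type*} [MetricSpace X] (f : X → X) (x y : X) (τ : ℝ) (n : ℕ) :
    distFreq f x y τ n ≤ 1 := by
  unfold distFreq
  apply div_le_one_of_le₀ _ (by positivity)
  have := Finset.card_filter_le (Finset.range n) (fun i => dist (f^[i] x) (f^[i] y) < τ)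
  rw [Finset.card_range] at this
  exact_mod_cast this

theorem aux_freq_ge {X : Type*} [MetricSpace X] (f : X → X) (x y : X) (τ : ℝ) (n s A : ℕ)
    (hn : 0 < n) (hA : 0 < A) (hs : n * s ≤ A)
    (h : ∀ i, s ≤ i → i < A → dist (f^[i] x) (f^[i] y) < τ) :
    1 - 1 / (n : ℝ) ≤ distFreq f x y τ A := by
  unfold distFreq
  have hsub : Finset.Ico s A ⊆
      (Finset.range A).filter fun i => dist (f^[i] x) (f^[i] y) < τ := by
    intro i hi
    rw [Finset.mem_Ico] at hi
    simp only [Finset.mem_filter, Finset.mem_range]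
    exact ⟨hi.2, h i hi.1 hi.2⟩
  have hc := Finset.card_le_card hsub
  rw [Nat.card_Ico] at hc
  have hcd : A ≤ ((Finset.range A).filter fun i => dist (f^[i] x) (f^[i] y) < τ).card + s := by
    omega
  have hc2 : (A : ℝ) ≤
      (((Finset.range A).filter fun i => dist (f^[i] x) (f^[i] y) < τ).card : ℝ) + s := by
    exact_mod_cast hcd
  have hs2 : (n : ℝ) * s ≤ A := by exact_mod_cast hs
  have hnd : (0 : ℝ) < n := by exact_mod_cast hn
  have hAd : (0 : ℝ) < A := by exact_mod_cast hA
  rw [le_div_iff₀ hAd]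
  have : (s : ℝ) ≤ 1 / n * A := by
    rw [one_div, inv_mul_eq_div, le_div_iff₀ hnd]; linarith
  linarith

theorem aux_freq_small {X : Type*} [MetricSpace X] (f : X → X) (x y : X) (τ : ℝ) (n s A : ℕ)
    (hn : 0 < n) (hA : 0 < A) (hs : n * s ≤ A)
    (h : ∀ i, s ≤ i → i < A → τ ≤ dist (f^[i] x) (f^[i] y)) :
    distFreq f x y τ A ≤ 1 / (n : ℝ) := by
  unfold distFreq
  have hsub : ((Finset.range A).filter fun i => dist (f^[i] x) (f^[i] y) < τ)
      ⊆ Finset.range s := by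
    intro i hi
    simp only [Finset.mem_filter, Finset.mem_range] at hi ⊢
    by_contra hlt
    exact absurd hi.2 (not_lt.2 (h i (not_lt.1 hlt) hi.1))
  have hc := Finset.card_le_card hsub
  rw [Finset.card_range] at hc
  have hc2 :
      (((Finset.range A).filter fun i => dist (f^[i] x) (f^[i] y) < τ).card : ℝ) ≤ s := by
    exact_mod_cast hc
  have hs2 : (n : ℝ) * s ≤ A := by exact_mod_cast hs
  have hnd : (0 : ℝ) < n := by exact_mod_cast hn
  have hAd : (0 : ℝ) < A := by exact_mod_cast hA
  rw [div_le_iff₀ hAd]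
  have : (s : ℝ) ≤ 1 / n * A := by
    rw [one_div, inv_mul_eq_div, le_div_iff₀ hnd]; linarith
  linarith

theorem aux_tsum {X : Type*} [NormedAddCommGroup X] [CompleteSpace X] (v : ℕ → X) (n : ℕ)
    (h1 : ∀ j < n, ‖v j‖ ≤ (1 / 2 : ℝ) ^ n) (h2 : ∀ j, n ≤ j → ‖v j‖ ≤ (1 / 2 : ℝ) ^ j) :
    Summable v ∧ ‖∑' j, v j‖ ≤ (n + 2) * (1 / 2 : ℝ) ^ n := by
  have hS : Summable (fun j => ‖v (j + n)‖) := by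
    refine Summable.of_nonneg_of_le (fun j => norm_nonneg _) (fun j => h2 (j + n) (by omega)) ?_
    exact (summable_nat_add_iff n).2 summable_geometric_two
  have hSd : Summable (fun j => ‖v j‖) :=
    (summable_nat_add_iff (f := fun j => ‖v j‖) n).1 hS
  refine ⟨hSd.of_norm, ?_⟩
  refine (norm_tsum_le_tsum_norm hSd).trans ?_
  rw [← hSd.sum_add_tsum_nat_add n]
  have e1 : ∑ j ∈ Finset.range n, ‖v j‖ ≤ n * (1 / 2 : ℝ) ^ n := by
    have := Finset.sum_le_card_nsmul (Finset.range n) (fun j => ‖v j‖) ((1 / 2 : ℝ) ^ n)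
      (fun j hj => h1 j (Finset.mem_range.1 hj))
    simpa using this
  have e2 : ∑' j, ‖v (j + n)‖ ≤ 2 * (1 / 2 : ℝ) ^ n := by
    have hg : Summable (fun j : ℕ => (1 / 2 : ℝ) ^ (j + n)) :=
      (summable_nat_add_iff n).2 summable_geometric_two
    refine (hS.tsum_le_tsum (fun j => h2 (j + n) (by omega)) hg).trans ?_
    simp_rw [pow_add]
    rw [tsum_mul_right, tsum_geometric_two]
  linarith

structure Blk (X : Type*) where
  k : ℕ
  u : X
  s : ℕ
  A : ℕ
  t : ℕ
  B : ℕ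

theorem aux_construct {X : Type*} [NormedAddCommGroup X] [NormedSpace ℂ X]
    (T : X →L[ℂ] X) (hT : NormUnimodal T) :
    ∃ f : ℕ → Blk X, (∀ n, n ≤ (f n).k) ∧
      (∀ n, (f n).k * (f n).s ≤ (f n).A ∧ (f n).k * (f n).t ≤ (f n).B ∧ (f n).s ≤ (f n).t ∧
        (f n).t < (f n).B ∧ (f n).k < (f n).A ∧ (f n).A ≤ (f n).B ∧
        (∀ i, i < (f n).A → ‖(T ^ i) (f n).u‖ ≤ (1 / 2 : ℝ) ^ (f n).k) ∧
        (∀ i, (f n).t ≤ i → i < (f n).B → 3 ≤ ‖(T ^ i) (f n).u‖)) ∧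
      (∀ m n, m < n →
        (∀ i, (f n).s ≤ i → ‖(T ^ i) (f m).u‖ ≤ (1 / 2 : ℝ) ^ (f n).k) ∧
        (∀ i, i < (f m).B → ‖(T ^ i) (f n).u‖ ≤ (1 / 2 : ℝ) ^ (f n).k)) := by
  obtain ⟨r, hr, hx⟩ := hT
  obtain ⟨f, hP, hR⟩ := exists_seq_of_forall_finset_exists
    (fun b : Blk X => (b.k * b.s ≤ b.A ∧ b.k * b.t ≤ b.B ∧ b.s ≤ b.t ∧
        b.t < b.B ∧ b.k < b.A ∧ b.A ≤ b.B ∧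
        (∀ i, i < b.A → ‖(T ^ i) b.u‖ ≤ (1 / 2 : ℝ) ^ b.k) ∧
        (∀ i, b.t ≤ i → i < b.B → 3 ≤ ‖(T ^ i) b.u‖)) ∧
        Tendsto (fun k => ‖(T ^ k) b.u‖) atTop (𝓝 0))
    (fun a b : Blk X => a.k < b.k ∧ (∀ i, b.s ≤ i → ‖(T ^ i) a.u‖ ≤ (1 / 2 : ℝ) ^ b.k) ∧
        (∀ i, i < a.B → ‖(T ^ i) b.u‖ ≤ (1 / 2 : ℝ) ^ b.k)) (by
    intro S hS
    set K := S.sup Blk.k + 1 with hK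
    have hev : ∀ᶠ i in atTop, ∀ a ∈ S, ‖(T ^ i) a.u‖ ≤ (1 / 2 : ℝ) ^ K := by
      rw [Filter.eventually_all_finset]
      intro a ha
      exact ((hS a ha).2.eventually_lt_const (by positivity)).mono fun _ h => h.le
    obtain ⟨s, hs⟩ := eventually_atTop.1 hev
    set A := K * s + K + 1 + S.sup Blk.B with hA
    set C := ‖T‖ + 1 with hC
    have hC1 : 1 ≤ C := by rw [hC]; linarith [norm_nonneg T]
    set δ : ℝ := (1 / 2 : ℝ) ^ K / C ^ A with hδ
    have hδ0 : 0 < δ := by positivity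
    obtain ⟨t0, ht0⟩ := pow_unbounded_of_one_lt (3 / δ) hr
    set t := max t0 s + 1 with ht
    set B := K * t + A + t + 1 with hB
    obtain ⟨x, hx0, hxt, hxi⟩ := hx B
    have hxn : 0 < ‖x‖ := norm_pos_iff.2 hx0
    set c : ℂ := ((δ / ‖x‖ : ℝ) : ℂ) with hc
    have hcn : ‖c‖ = δ / ‖x‖ := by
      rw [hc, Complex.norm_real, Real.norm_of_nonneg (by positivity)]
    have hcu : ∀ i, ‖(T ^ i) (c • x)‖ = δ / ‖x‖ * ‖(T ^ i) x‖ := by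
      intro i
      rw [map_smul, norm_smul, hcn]
    have hup : ∀ i, i ≤ A → ‖(T ^ i) (c • x)‖ ≤ (1 / 2 : ℝ) ^ K := by
      intro i hi
      have h1 : ‖(T ^ i) x‖ ≤ C ^ A * ‖x‖ := by
        refine ((T ^ i).le_opNorm x).trans ?_
        gcongr
        have hop : ∀ i : ℕ, ‖T ^ i‖ ≤ C ^ i := by
          intro i
          induction i with
          | zero => simpa using! ContinuousLinearMap.norm_id_le (𝕜 := ℂ) (E := X)
          | succ k ih =>
            rw [pow_succ, pow_succ]
            refine (norm_mul_le _ _).trans ?_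
            have : ‖T‖ ≤ C := by rw [hC]; linarith
            gcongr
        exact (hop i).trans (pow_le_pow_right₀ hC1 hi)
      rw [hcu]
      calc δ / ‖x‖ * ‖(T ^ i) x‖ ≤ δ / ‖x‖ * (C ^ A * ‖x‖) := by gcongr
        _ = (1 / 2 : ℝ) ^ K := by
          rw [hδ]; field_simp
    refine ⟨⟨K, c • x, s, A, t, B⟩, ⟨⟨?_, ?_, ?_, ?_, ?_, ?_, ?_, ?_⟩, ?_⟩, ?_⟩
    · show K * s ≤ A
      omega
    · show K * t ≤ B
      omega
    · show s ≤ t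
      omega
    · show t < B
      omega
    · show K < A
      omega
    · show A ≤ B
      omega
    · exact fun i hi => hup i (le_of_lt hi)
    · intro i (hi : t ≤ i) (hi2 : i < B)
      show 3 ≤ ‖(T ^ i) (c • x)‖
      rw [hcu]
      have h1 := hxi i (by omega) hi2.le
      have h2 : r ^ t0 ≤ r ^ i := pow_le_pow_right₀ hr.le (by omega)
      have h3 : 3 / δ ≤ r ^ i := ht0.le.trans h2
      calc (3 : ℝ) = δ / ‖x‖ * (3 / δ * ‖x‖) := by field_simp
        _ ≤ δ / ‖x‖ * (r ^ i * ‖x‖) := by gcongr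
        _ ≤ _ := by gcongr
    · show Tendsto (fun k => ‖(T ^ k) (c • x)‖) atTop (𝓝 0)
      simp_rw [hcu]
      simpa using hxt.const_mul (δ / ‖x‖)
    · intro a ha
      have h1 : a.k ≤ S.sup Blk.k := Finset.le_sup ha
      have h2 : a.B ≤ S.sup Blk.B := Finset.le_sup ha
      refine ⟨?_, ?_, ?_⟩
      · show a.k < K
        omega
      · intro i hi
        exact hs i hi a ha
      · intro i hi
        exact hup i (by omega))
  refine ⟨f, ?_, fun n => (hP n).1, fun m n h => (hR m n h).2⟩
  have hmono : StrictMono (fun n => (f n).k) := fun m n h => (hR m n h).1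
  exact fun n => hmono.le_apply

theorem aux_tend : Tendsto (fun n : ℕ => ((n : ℝ) + 2) * (1 / 2 : ℝ) ^ n) atTop (𝓝 0) := by
  have h1 := tendsto_self_mul_const_pow_of_lt_one (r := (1 / 2 : ℝ)) (by norm_num) (by norm_num)
  have h2 := (tendsto_pow_atTop_nhds_zero_of_lt_one (r := (1 / 2 : ℝ)) (by norm_num)
    (by norm_num)).const_mul 2
  have := h1.add h2
  simp only [mul_zero, add_zero] at this
  refine this.congr fun n => ?_
  ring

theorem aux_le_two (n : ℕ) : ((n : ℝ) + 2) * (1 / 2 : ℝ) ^ n ≤ 2 := by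
  induction n with
  | zero => norm_num
  | succ k ih =>
    refine le_trans ?_ ih
    rw [pow_succ]
    push_cast
    have : (0 : ℝ) < (1 / 2 : ℝ) ^ k := by positivity
    have hk : (0 : ℝ) ≤ k := by positivity
    nlinarith [mul_nonneg hk this.le]

theorem aux_iter {X : Type*} [NormedAddCommGroup X] [NormedSpace ℂ X] (T : X →L[ℂ] X)
    (i : ℕ) (x : X) : (fun x => T x)^[i] x = (T ^ i) x := by
  induction i generalizing x with
  | zero => simp
  | succ k ih => rw [Function.iterate_succ_apply, ih, pow_succ]; rfl

/-- If a bounded linear operator on a complex Banach space is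
norm-unimodal, then it is distributionally chaotic. -/
theorem stmt_0 {X : Type*} [NormedAddCommGroup X] [NormedSpace ℂ X] [CompleteSpace X]
    (T : X →L[ℂ] X) (hT : NormUnimodal T) :
    DistributionallyChaotic (fun x => T x) := by
  obtain ⟨f, hk, hP, hR⟩ := aux_construct T hT
  have hpow : ∀ n, (1 / 2 : ℝ) ^ (f n).k ≤ (1 / 2 : ℝ) ^ n := fun n =>
    pow_le_pow_of_le_one (by norm_num) (by norm_num) (hk n)
  -- coefficients
  have hsum : ∀ c : ℕ → ℂ, (∀ n, ‖c n‖ ≤ 1) → Summable (fun n => c n • (f n).u) := by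
    intro c hc
    refine (aux_tsum _ 0 (by simp) ?_).1
    intro j _
    rw [norm_smul]
    have h1 := (hP j).2.2.2.2.2.2.1 0 (by have := (hP j).2.2.2.2.1; omega)
    simp only [pow_zero, one_apply_eq_self] at h1
    calc ‖c j‖ * ‖(f j).u‖ ≤ 1 * (1 / 2 : ℝ) ^ (f j).k := by
          gcongr
          exact hc j
      _ ≤ _ := by rw [one_mul]; exact hpow j
  have hmap : ∀ c : ℕ → ℂ, (∀ n, ‖c n‖ ≤ 1) → ∀ i,
      (T ^ i) (∑' n, c n • (f n).u) = ∑' n, c n • (T ^ i) (f n).u := by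
    intro c hc i
    rw [(T ^ i).map_tsum (hsum c hc)]
    simp
  have hsmall : ∀ c : ℕ → ℂ, (∀ n, ‖c n‖ ≤ 1) → ∀ n i, (f n).s ≤ i → i < (f n).B →
      (i < (f n).A ∨ c n = 0) →
      ‖∑' n, c n • (T ^ i) (f n).u‖ ≤ (n + 2) * (1 / 2 : ℝ) ^ n := by
    intro c hc n i hi hiB hA
    have hle : ∀ j, ‖c j • (T ^ i) (f j).u‖ ≤ ‖(T ^ i) (f j).u‖ := by
      intro j
      rw [norm_smul]
      exact mul_le_of_le_one_left (norm_nonneg _) (hc j)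
    refine (aux_tsum _ n ?_ ?_).2
    · intro j hj
      exact (hle j).trans (((hR j n hj).1 i hi).trans (hpow n))
    · intro j hj
      rcases hj.eq_or_lt with rfl | hj
      · rcases hA with hA | hA
        · exact (hle n).trans (((hP n).2.2.2.2.2.2.1 i hA).trans (hpow n))
        · rw [hA, zero_smul, norm_zero]; positivity
      · exact (hle j).trans (((hR n j hj).2 i hiB).trans (hpow j))
  have hlarge : ∀ c : ℕ → ℂ, (∀ n, ‖c n‖ ≤ 1) → ∀ n i, ‖c n‖ = 1 → (f n).t ≤ i → i < (f n).B →
      1 ≤ ‖(T ^ i) (∑' n, c n • (f n).u)‖ := by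
    intro c hc n i hcn hi hiB
    set cd : ℕ → ℂ := Function.update c n 0 with hcd
    have hcb : ∀ j, ‖cd j‖ ≤ 1 := by
      intro j
      by_cases h : j = n
      · subst h; simp [hcd]
      · simpa [hcd, h] using hc j
    have hs := hsmall cd hcb n i ((hP n).2.2.1.trans hi) hiB (Or.inr (by simp [hcd]))
    rw [hmap c hc]
    have hS : Summable (fun n => c n • (T ^ i) (f n).u) := by
      have := (hsum c hc).map (T ^ i) (T ^ i).continuous
      refine this.congr fun n => ?_
      exact (T ^ i).map_smul (c n) (f n).u
    rw [hS.tsum_eq_add_tsum_ite n]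
    have he : (∑' j, if j = n then 0 else c j • (T ^ i) (f j).u)
        = ∑' j, cd j • (T ^ i) (f j).u := by
      congr 1
      funext j
      by_cases h : j = n
      · subst h; simp [hcd]
      · simp [hcd, h]
    rw [he]
    have h3 : 3 ≤ ‖c n • (T ^ i) (f n).u‖ := by
      rw [norm_smul, hcn, one_mul]
      exact (hP n).2.2.2.2.2.2.2 i hi hiB
    have h2 := hs.trans (aux_le_two n)
    have h4 := norm_sub_le_norm_add (c n • (T ^ i) (f n).u) (∑' j, cd j • (T ^ i) (f j).u)
    linarith
  -- the scrambled set
  let e : Set ℕ → ℕ → ℂ := fun S n => if (Nat.unpair n).1 ∈ S then 1 else 0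
  have he : ∀ S n, ‖e S n‖ ≤ 1 := by
    intro S n
    simp only [e]
    split_ifs <;> simp
  let x : Set ℕ → X := fun S => ∑' n, e S n • (f n).u
  have hdc : ∀ S R₂ n, ‖e S n - e R₂ n‖ ≤ 1 := by
    intro S R₂ n
    simp only [e]
    split_ifs <;> simp
  have hdiff : ∀ S R₂, x S - x R₂ = ∑' n, (e S n - e R₂ n) • (f n).u := by
    intro S R₂
    simp only [x, sub_smul]
    rw [(hsum _ (he S)).tsum_sub (hsum _ (he R₂))]
  have hinf : ∀ S R₂, S ≠ R₂ → ∀ M, ∃ n, M ≤ n ∧ ‖e S n - e R₂ n‖ = 1 := by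
    intro S R₂ hne M
    have : ∃ p, ¬ (p ∈ S ↔ p ∈ R₂) := by
      by_contra hcon
      push Not at hcon
      exact hne (Set.ext hcon)
    obtain ⟨p, hp⟩ := this
    refine ⟨Nat.pair p M, Nat.right_le_pair p M, ?_⟩
    simp only [e, Nat.unpair_pair]
    by_cases h1 : p ∈ S <;> by_cases h2 : p ∈ R₂ <;> simp_all
  have hdist : ∀ S R₂ i, dist ((fun x => T x)^[i] (x S)) ((fun x => T x)^[i] (x R₂))
      = ‖(T ^ i) (∑' n, (e S n - e R₂ n) • (f n).u)‖ := by
    intro S R₂ i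
    rw [aux_iter, aux_iter, dist_eq_norm, ← map_sub, hdiff]
  have hinj : Function.Injective x := by
    intro S R₂ hx
    by_contra hne
    obtain ⟨n, -, hn⟩ := hinf S R₂ hne 0
    have h1 := hlarge _ (hdc S R₂) n (f n).t hn le_rfl (hP n).2.2.2.1
    rw [← hdiff, hx, sub_self, map_zero, norm_zero] at h1
    linarith
  refine ⟨Set.range x, ?_, ?_⟩
  · intro hcount
    have : Countable (Set.range x) := hcount.to_subtype
    have : Countable (Set ℕ) := (Equiv.ofInjective x hinj).countable_iff.2 this
    obtain ⟨g, hg⟩ := exists_injective_nat (Set ℕ)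
    exact Function.cantor_injective g hg
  · rintro _ ⟨S, rfl⟩ _ ⟨R₂, rfl⟩ hxy
    have hne : S ≠ R₂ := fun h => hxy (by rw [h])
    constructor
    · intro τ hτ
      apply aux_limsup _ (aux_freq_nonneg _ _ _ _) (aux_freq_le _ _ _ _)
      intro η hη
      rw [frequently_atTop]
      intro M
      obtain ⟨N, hN⟩ := exists_nat_gt (1 / η)
      obtain ⟨N2, hN2⟩ := eventually_atTop.1 (aux_tend.eventually_lt_const hτ)
      set n := M + N + N2 + 1 with hn
      have hkn := hk n
      have hkA := (hP n).2.2.2.2.1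
      refine ⟨(f n).A, by omega, ?_⟩
      have hge := aux_freq_ge (fun x => T x) (x S) (x R₂) τ n (f n).s (f n).A (by omega) (by omega)
        ((Nat.mul_le_mul_right _ hkn).trans (hP n).1) (by
          intro i hi hiA
          rw [hdist, hmap _ (hdc S R₂)]
          exact (hsmall _ (hdc S R₂) n i hi (hiA.trans_le (hP n).2.2.2.2.2.1)
            (Or.inl hiA)).trans_lt (hN2 n (by omega)))
      have hNn : (N : ℝ) ≤ n := by exact_mod_cast (by omega : N ≤ n)
      have : 1 / (n : ℝ) ≤ η := by
        rw [div_le_iff₀ (by rw [hn]; positivity)]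
        rw [div_lt_iff₀ hη] at hN
        nlinarith
      linarith
    · refine ⟨1, one_pos, ?_⟩
      apply aux_liminf _ (aux_freq_nonneg _ _ _ _) (aux_freq_le _ _ _ _)
      intro η hη
      rw [frequently_atTop]
      intro M
      obtain ⟨N, hN⟩ := exists_nat_gt (1 / η)
      obtain ⟨n, hnM, hn⟩ := hinf S R₂ hne (M + N + 1)
      have hkn := hk n
      have hkA := (hP n).2.2.2.2.1
      have hAB := (hP n).2.2.2.2.2.1
      refine ⟨(f n).B, by omega, ?_⟩
      have hge := aux_freq_small (fun x => T x) (x S) (x R₂) 1 n (f n).t (f n).B (by omega)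
        (by omega) ((Nat.mul_le_mul_right _ hkn).trans (hP n).2.1) (by
          intro i hi hiB
          rw [hdist]
          exact hlarge _ (hdc S R₂) n i hn hi hiB)
      have hNn : (N : ℝ) ≤ n := by exact_mod_cast (by omega : N ≤ n)
      have hn0 : (0 : ℝ) < n := by exact_mod_cast (by omega : 0 < n)
      have : 1 / (n : ℝ) ≤ η := by
        rw [div_le_iff₀ hn0]
        rw [div_lt_iff₀ hη] at hN
        nlinarith
      linarith
end

section
/- Let X be a complex Banach space and let T, C be bounded linear operators on X with C invertible (with bounded inverse). If T is norm-unimodal, then C⁻¹TC is also norm-unimodal. -/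
open Filter Topology MeasureTheory
open scoped Classical ENNReal

/-- Norm-unimodality is invariant under similarity. -/
theorem stmt_2 {X : Type*} [NormedAddCommGroup X] [NormedSpace ℂ X] [CompleteSpace X]
    (T : X →L[ℂ] X) (C : (X →L[ℂ] X)ˣ) (hT : NormUnimodal T) :
    NormUnimodal ((↑C⁻¹ : X →L[ℂ] X) * T * (↑C : X →L[ℂ] X)) := by
  obtain ⟨r, hr, H⟩ := hT
  obtain ⟨s, hs1, hsr⟩ := exists_between hr
  have hs0 : 0 < s := by linarith
  have hr0 : 0 < r := by linarith
  set A : X →L[ℂ] X := (↑C⁻¹ : X →L[ℂ] X) with hA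
  set B : X →L[ℂ] X := (↑C : X →L[ℂ] X) with hB
  have hBA : ∀ v, B (A v) = v := fun v => by
    have h : B * A = 1 := C.mul_inv
    simpa using congrArg (fun f : X →L[ℂ] X => f v) h
  have hpow : ∀ k v, ((A * T * B) ^ k) (A v) = A ((T ^ k) v) := fun k v => by
    have h : (A * T * B) ^ k = A * T ^ k * B := Units.conj_pow' C T k
    rw [h]
    simp [hBA]
  have hq : 1 < r / s := (one_lt_div hs0).2 hsr
  obtain ⟨n0, hn0⟩ := pow_unbounded_of_one_lt (‖A‖ * ‖B‖) hq
  refine ⟨s, hs1, fun m => ?_⟩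
  obtain ⟨x, hx, hlim, hgr⟩ := H (n0 + m)
  have hgr' : ∀ i, i ≤ n0 + m → r ^ i * ‖x‖ ≤ ‖(T ^ i) x‖ := by
    intro i hi
    rcases Nat.eq_zero_or_pos i with rfl | h
    · simp
    · exact hgr i h hi
  have hAne : ∀ v, v ≠ 0 → A v ≠ 0 := fun v hv h => hv (by rw [← hBA v, h, map_zero])
  obtain ⟨j, hj, hmin⟩ := Finset.exists_min_image (Finset.range (n0 + m + 1))
    (fun i => ‖A ((T ^ i) x)‖ / s ^ i) ⟨0, by simp⟩
  have hjN : j ≤ n0 + m := by simpa [Nat.lt_succ_iff] using hj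
  have hy0 : 0 < ‖A x‖ := norm_pos_iff.2 (hAne x hx)
  have hj0 : j < n0 := by
    by_contra hcon
    have hcon : n0 ≤ j := not_lt.1 hcon
    have h1 : ‖A ((T ^ j) x)‖ / s ^ j ≤ ‖A x‖ := by simpa using hmin 0 (by simp)
    rw [div_le_iff₀ (by positivity)] at h1
    have h2 : ‖(T ^ j) x‖ ≤ ‖B‖ * ‖A ((T ^ j) x)‖ := by
      simpa [hBA] using B.le_opNorm (A ((T ^ j) x))
    have h3 := A.le_opNorm x
    have h4 : ‖A‖ * ‖B‖ < (r / s) ^ j := hn0.trans_le (pow_le_pow_right₀ hq.le hcon)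
    rw [div_pow, lt_div_iff₀ (by positivity)] at h4
    have : r ^ j * ‖A x‖ ≤ ‖A‖ * ‖B‖ * s ^ j * ‖A x‖ := calc
      r ^ j * ‖A x‖ ≤ r ^ j * (‖A‖ * ‖x‖) := by gcongr
      _ = ‖A‖ * (r ^ j * ‖x‖) := by ring
      _ ≤ ‖A‖ * (‖B‖ * (‖A x‖ * s ^ j)) := by
        have := (hgr' j hjN).trans h2
        exact mul_le_mul_of_nonneg_left (this.trans (by gcongr)) (norm_nonneg _)
      _ = _ := by ring
    exact absurd (le_of_mul_le_mul_right this hy0) (not_le.2 h4)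
  refine ⟨A ((T ^ j) x), hAne _ ?_, ?_, ?_⟩
  · have : 0 < ‖x‖ := norm_pos_iff.2 hx
    exact norm_pos_iff.1 (lt_of_lt_of_le (by positivity) (hgr' j hjN))
  · have h1 : Tendsto (fun k => (T ^ k) x) atTop (nhds 0) := tendsto_zero_iff_norm_tendsto_zero.2 hlim
    have h2 := (A.continuous.tendsto 0).comp ((tendsto_add_atTop_iff_nat j).2 h1)
    rw [map_zero] at h2
    refine (tendsto_zero_iff_norm_tendsto_zero.1 h2).congr fun k => ?_
    simp [hpow, pow_add]
  · intro i _ hi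
    have h := hmin (j + i) (by simp; omega)
    rw [div_le_div_iff₀ (by positivity) (by positivity), pow_add s] at h
    have he : (T ^ i) ((T ^ j) x) = (T ^ (j + i)) x := by
      rw [add_comm j i, pow_add]; rfl
    rw [hpow, he]
    have hsj : 0 < s ^ j := by positivity
    refine le_of_mul_le_mul_right ?_ hsj
    linarith
end

section
/- Let X be a complex Banach space and T a bounded linear operator on X. Then T is norm-unimodal if and only if there exist a constant r > 1 and N ∈ ℕ such that for every m ≥ N there exists a nonzero vector x_m ∈ X with lim_{k→∞} ‖T^k x_m‖ = 0 and ‖T^i x_m‖ ≥ r^i‖x_m‖ for all i with N ≤ i ≤ m. -/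
open Filter Topology MeasureTheory
open scoped Classical ENNReal

/-- Equivalent characterization of norm-unimodality. -/
theorem stmt_3 {X : Type*} [NormedAddCommGroup X] [NormedSpace ℂ X] [CompleteSpace X]
    (T : X →L[ℂ] X) :
    NormUnimodal T ↔
      ∃ (r : ℝ) (N : ℕ), 1 < r ∧ ∀ m : ℕ, N ≤ m → ∃ x : X, x ≠ 0 ∧
        Filter.Tendsto (fun k => ‖(T ^ k) x‖) Filter.atTop (nhds 0) ∧
        ∀ i : ℕ, N ≤ i → i ≤ m → r ^ i * ‖x‖ ≤ ‖(T ^ i) x‖ := by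
  constructor
  · rintro ⟨r, hr, h⟩
    refine ⟨r, 1, hr, fun m _ => h m⟩
  · rintro ⟨r, N, hr, h⟩
    refine ⟨r, hr, fun m => ?_⟩
    obtain ⟨x, hx, hlim, hg⟩ := h (N + m) (by omega)
    have hr0 : 0 < r := by linarith
    have hxn : 0 < ‖x‖ := norm_pos_iff.mpr hx
    obtain ⟨j, hj, hmin⟩ := Finset.exists_min_image (Finset.range (N + 1))
      (fun i => ‖(T ^ i) x‖ / r ^ i) ⟨0, by simp⟩
    have hjN : j ≤ N := by simpa [Nat.lt_succ_iff] using hj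
    have h0 : ‖(T ^ j) x‖ / r ^ j ≤ ‖x‖ := by simpa using hmin 0 (by simp)
    have key : ∀ i, i ≤ N + m → ‖(T ^ j) x‖ / r ^ j ≤ ‖(T ^ i) x‖ / r ^ i := by
      intro i hi
      by_cases hiN : i ≤ N
      · exact hmin i (by simpa [Nat.lt_succ_iff] using hiN)
      · refine h0.trans ?_
        rw [le_div_iff₀ (by positivity), mul_comm]
        exact hg i (by omega) hi
    have hadd : ∀ i, (T ^ i) ((T ^ j) x) = (T ^ (i + j)) x := by
      intro i
      rw [pow_add]
      rfl
    refine ⟨(T ^ j) x, ?_, ?_, ?_⟩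
    · intro hz
      have h1 := hg N le_rfl (by omega)
      have h2 : (T ^ N) x = 0 := by
        have := hadd (N - j)
        rw [Nat.sub_add_cancel hjN, hz, map_zero] at this
        exact this.symm
      rw [h2, norm_zero] at h1
      have : 0 < r ^ N * ‖x‖ := by positivity
      linarith
    · simp only [hadd]
      exact (tendsto_add_atTop_iff_nat (f := fun k => ‖(T ^ k) x‖) j).mpr hlim
    · intro i _ him
      rw [hadd]
      have h1 := key (i + j) (by omega)
      rw [div_le_div_iff₀ (by positivity) (by positivity), pow_add] at h1
      have hp : 0 < r ^ j := by positivity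
      refine le_of_mul_le_mul_right ?_ hp
      linarith
end

section
/- Let T be the bounded linear operator on ℓ²(ℤ, ℂ) determined on the canonical orthonormal basis (e_n)_{n∈ℤ} by T e_n = ω_n e_{n−1}, where ω_n = 2 if n ≥ 0 and ω_n = (|n|−1)/|n| if n < 0. Then T is norm-unimodal. -/
open Filter Topology MeasureTheory
open scoped Classical ENNReal

/-- The bilateral weighted backward shift with weights
ω_n = 2 for n ≥ 0 and ω_n = (|n|-1)/|n| for n < 0 is norm-unimodal. -/
theorem stmt_5 (T : lp (fun _ : ℤ => ℂ) 2 →L[ℂ] lp (fun _ : ℤ => ℂ) 2)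
    (ω : ℤ → ℝ)
    (hω : ∀ n : ℤ, ω n = if 0 ≤ n then 2 else (((|n| : ℤ) : ℝ) - 1) / ((|n| : ℤ) : ℝ))
    (hT : ∀ n : ℤ, T (lp.single 2 n (1 : ℂ)) = ((ω n : ℝ) : ℂ) • lp.single 2 (n - 1) (1 : ℂ)) :
    NormUnimodal T := by
  have key : ∀ (m i : ℕ), i ≤ m + 1 → (T ^ i) (lp.single 2 (m : ℤ) (1 : ℂ)) =
      ((2 : ℂ) ^ i) • lp.single 2 ((m : ℤ) - i) (1 : ℂ) := by
    intro m i
    induction i with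
    | zero => intro _; simp
    | succ k ih =>
      intro hk
      have h0 : (0 : ℤ) ≤ (m : ℤ) - k := by omega
      rw [pow_succ', ContinuousLinearMap.mul_apply, ih (by omega), map_smul, hT, hω, if_pos h0,
        smul_smul, pow_succ]
      have h1 : (m : ℤ) - k - 1 = (m : ℤ) - ((k + 1 : ℕ) : ℤ) := by push_cast; ring
      rw [h1]
      norm_num
  have nrm : ∀ n : ℤ, ‖(lp.single 2 n (1 : ℂ) : lp (fun _ : ℤ => ℂ) 2)‖ = 1 := by
    intro n
    rw [lp.norm_single (by norm_num)]
    simp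
  have hz : ∀ m : ℕ, (T ^ (m + 2)) (lp.single 2 (m : ℤ) (1 : ℂ)) = 0 := by
    intro m
    have h1 : (m : ℤ) - ((m + 1 : ℕ) : ℤ) = -1 := by push_cast; ring
    rw [pow_succ' T (m + 1), ContinuousLinearMap.mul_apply, key m (m + 1) le_rfl, map_smul, h1,
      hT, hω]
    simp
  refine ⟨2, by norm_num, fun m => ⟨lp.single 2 (m : ℤ) (1 : ℂ), ?_, ?_, ?_⟩⟩
  · rw [← norm_ne_zero_iff, nrm]
    exact one_ne_zero
  · refine tendsto_const_nhds.congr' ?_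
    filter_upwards [eventually_ge_atTop (m + 2)] with k hk
    obtain ⟨j, rfl⟩ := Nat.exists_eq_add_of_le' hk
    rw [pow_add, ContinuousLinearMap.mul_apply, hz, map_zero, norm_zero]
  · intro i _ hi
    rw [key m i (by omega), norm_smul, nrm, nrm]
    simp
end

section
/- Let T be the bounded linear operator on ℓ²(ℤ, ℂ) determined on the canonical orthonormal basis (e_n)_{n∈ℤ} by T e_n = ω_n e_{n−1}, where ω_n = (n+2)/(n+1) if n ≥ 0 and ω_n = (|n|−1)/|n| if n < 0. Then T is distributionally chaotic. -/
open Filter Topology MeasureTheory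
open scoped Classical ENNReal

lemma aux_limsup_s6 (u : ℕ → ℝ) (h0 : ∀ n, 0 ≤ u n) (h1 : ∀ n, u n ≤ 1) (φ : ℕ → ℕ)
    (hφ : Tendsto φ atTop atTop) (h : ∀ᶠ j : ℕ in atTop, 1 - 1 / ((j : ℝ) + 1) ≤ u (φ j)) :
    Filter.limsup u atTop = 1 := by
  have hb : IsBoundedUnder (· ≤ ·) atTop u := isBoundedUnder_of ⟨1, h1⟩
  have hc : IsCoboundedUnder (· ≤ ·) atTop u :=
    (isBoundedUnder_of ⟨0, h0⟩ : IsBoundedUnder (· ≥ ·) atTop u).isCoboundedUnder_le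
  apply le_antisymm
  · exact limsup_le_of_le hc (Eventually.of_forall h1)
  · apply le_of_forall_sub_le
    intro δ hδ
    apply le_limsup_of_frequently_le _ hb
    have ht : ∀ᶠ j : ℕ in atTop, 1 / ((j : ℝ) + 1) < δ :=
      (tendsto_one_div_add_atTop_nhds_zero_nat (𝕜 := ℝ)).eventually_lt_const hδ
    have : ∃ᶠ j in atTop, 1 - δ ≤ u (φ j) := by
      apply Eventually.frequently
      filter_upwards [h, ht] with j a b
      linarith
    exact hφ.frequently this

lemma aux_liminf_s6 (u : ℕ → ℝ) (h0 : ∀ n, 0 ≤ u n) (h1 : ∀ n, u n ≤ 1) (φ : ℕ → ℕ)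
    (hφ : Tendsto φ atTop atTop) (h : ∀ᶠ j : ℕ in atTop, u (φ j) ≤ 1 / ((j : ℝ) + 1)) :
    Filter.liminf u atTop = 0 := by
  have hb : IsBoundedUnder (· ≥ ·) atTop u := isBoundedUnder_of ⟨0, h0⟩
  have hc : IsCoboundedUnder (· ≥ ·) atTop u :=
    (isBoundedUnder_of ⟨1, h1⟩ : IsBoundedUnder (· ≤ ·) atTop u).isCoboundedUnder_ge
  apply le_antisymm
  · apply le_of_forall_pos_le_add
    intro δ hδ
    apply liminf_le_of_frequently_le _ hb
    have ht : ∀ᶠ j : ℕ in atTop, 1 / ((j : ℝ) + 1) < δ :=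
      (tendsto_one_div_add_atTop_nhds_zero_nat (𝕜 := ℝ)).eventually_lt_const hδ
    have : ∃ᶠ j in atTop, u (φ j) ≤ 0 + δ := by
      apply Eventually.frequently
      filter_upwards [h, ht] with j a b
      linarith
    exact hφ.frequently this
  · exact le_liminf_of_le hc (Eventually.of_forall h0)

/-- Reduction: one distributionally irregular vector suffices. -/
lemma aux_reduction {E : Type*} [NormedAddCommGroup E] [NormedSpace ℂ E] (T : E →L[ℂ] E) (x : E)
    (hx : ∀ j : ℕ, ∀ k, (2 * j).factorial ≤ k → k < (2 * j + 1).factorial → 1 ≤ ‖(T ^ k) x‖)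
    (hs : ∀ τ : ℝ, 0 < τ → ∀ᶠ j : ℕ in atTop, ∀ k, (2 * j + 1).factorial ≤ k →
      k < (j + 1) * (2 * j + 1).factorial → ‖(T ^ k) x‖ < τ) :
    DistributionallyChaotic (fun y => T y) := by
  have hx0 : x ≠ 0 := by
    rintro rfl
    have := hx 1 2 (by decide) (by decide)
    simp at this
    linarith
  have hfreq0 : ∀ (y z : E) τ n, 0 ≤ distFreq (fun y => T y) y z τ n := by
    intro y z τ n; unfold distFreq; positivity
  have hfreq1 : ∀ (y z : E) τ n, distFreq (fun y => T y) y z τ n ≤ 1 := by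
    intro y z τ n
    unfold distFreq
    apply div_le_one_of_le₀ _ (by positivity)
    exact_mod_cast (Finset.card_filter_le _ _).trans (by simp)
  have hdist : ∀ (a b : ℂ) i, dist ((fun y => T y)^[i] (a • x)) ((fun y => T y)^[i] (b • x))
      = ‖a - b‖ * ‖(T ^ i) x‖ := by
    intro a b i
    have : ∀ y, (fun y => T y)^[i] y = (T ^ i) y := by
      intro y; simp
    rw [this, this, dist_eq_norm, ← map_sub, ← sub_smul, map_smul, norm_smul]
  refine ⟨Set.range (fun a : ℂ => a • x), ?_, ?_⟩
  · intro hc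
    have hinj : Function.Injective (fun a : ℂ => a • x) := smul_left_injective ℂ hx0
    rw [← Set.image_univ] at hc
    have := Set.countable_of_injective_of_countable_image hinj.injOn hc
    exact not_countable_complex this
  · rintro _ ⟨a, rfl⟩ _ ⟨b, rfl⟩ hab
    have hp : 0 < ‖a - b‖ := by
      rw [norm_pos_iff, sub_ne_zero]
      rintro rfl
      exact hab rfl
    refine ⟨fun τ hτ => ?_, ‖a - b‖, hp, ?_⟩
    · apply aux_limsup_s6 _ (hfreq0 _ _ _) (hfreq1 _ _ _) (fun j => (j + 1) * (2 * j + 1).factorial)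
      · apply tendsto_atTop_mono _ tendsto_id
        intro j
        have := Nat.factorial_pos (2 * j + 1)
        simp only [id]
        nlinarith
      · filter_upwards [hs (τ / ‖a - b‖) (by positivity)] with j hj
        have hF : (0 : ℝ) < ((2 * j + 1).factorial : ℝ) := by
          exact_mod_cast Nat.factorial_pos _
        unfold distFreq
        have hsub : Finset.Ico (2 * j + 1).factorial ((j + 1) * (2 * j + 1).factorial) ⊆
            (Finset.range ((j + 1) * (2 * j + 1).factorial)).filter fun i =>
              dist ((fun y => T y)^[i] (a • x)) ((fun y => T y)^[i] (b • x)) < τ := by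
          intro k hk
          rw [Finset.mem_Ico] at hk
          rw [Finset.mem_filter, Finset.mem_range, hdist]
          refine ⟨hk.2, ?_⟩
          have := hj k hk.1 hk.2
          rw [lt_div_iff₀ hp] at this
          linarith
        have hcard := Finset.card_le_card hsub
        rw [Nat.card_Ico] at hcard
        have h2 : ((j + 1) * (2 * j + 1).factorial - (2 * j + 1).factorial)
          = j * (2 * j + 1).factorial := by rw [add_mul, one_mul]; simp
        rw [h2] at hcard
        have hcard' : ((j * (2 * j + 1).factorial : ℕ) : ℝ) ≤ _ := Nat.cast_le.mpr hcard
        push_cast at hcard' ⊢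
        rw [le_div_iff₀ (by positivity)]
        refine le_trans (le_of_eq ?_) hcard'
        field_simp
        ring
    · apply aux_liminf_s6 _ (hfreq0 _ _ _) (hfreq1 _ _ _) (fun j => (2 * j + 1).factorial)
      · apply tendsto_atTop_mono _ tendsto_id
        intro j
        have := Nat.self_le_factorial (2 * j + 1)
        simp only [id]
        omega
      · refine Eventually.of_forall fun j => ?_
        have hF : (0 : ℝ) < ((2 * j).factorial : ℝ) := by
          exact_mod_cast Nat.factorial_pos _
        unfold distFreq
        have hsub : ((Finset.range ((2 * j + 1).factorial)).filter fun i =>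
              dist ((fun y => T y)^[i] (a • x)) ((fun y => T y)^[i] (b • x)) < ‖a - b‖) ⊆
            Finset.range ((2 * j).factorial) := by
          intro k hk
          rw [Finset.mem_filter, Finset.mem_range, hdist] at hk
          rw [Finset.mem_range]
          by_contra hcon
          have := hx j k (not_lt.mp hcon) hk.1
          nlinarith [hk.2]
        have hcard := Finset.card_le_card hsub
        rw [Finset.card_range] at hcard
        have hcard' := (Nat.cast_le (α := ℝ)).mpr hcard
        rw [div_le_div_iff₀ (by exact_mod_cast Nat.factorial_pos _) (by positivity)]
        have hfs : (((2 * j + 1).factorial : ℕ) : ℝ)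
            = (2 * (j : ℝ) + 1) * ((2 * j).factorial : ℝ) := by
          rw [Nat.factorial_succ]; push_cast; ring
        rw [hfs]
        have : (0 : ℝ) ≤ j := by positivity
        have := mul_le_mul_of_nonneg_right hcard' (by positivity : (0 : ℝ) ≤ (j : ℝ) + 1)
        nlinarith

/-- The set carrying the irregular vector. -/
def auxS : Set ℕ := {m | ∃ j : ℕ, (2 * j).factorial ≤ m ∧ m < (2 * j + 1).factorial}

lemma auxS_gap (j m : ℕ) (hm : m ∈ auxS) (h : (2 * j + 1).factorial ≤ m) :
    (2 * j + 2).factorial ≤ m := by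
  obtain ⟨i, h1, h2⟩ := hm
  rcases Nat.lt_or_ge j i with hij | hij
  · exact (Nat.factorial_le (by omega)).trans h1
  · have := Nat.factorial_le (show 2 * i + 1 ≤ 2 * j + 1 by omega)
    omega

noncomputable def auxA (m : ℕ) : ℝ := if m ∈ auxS then 1 / ((m : ℝ) + 1) else 0

lemma auxA_nonneg (m : ℕ) : 0 ≤ auxA m := by
  unfold auxA; split_ifs <;> positivity

lemma auxA_summable : Summable fun m => auxA m ^ 2 := by
  have h : Summable fun m : ℕ => 1 / ((m : ℝ) + 1) ^ 2 := by
    have := (summable_nat_add_iff 1).mpr (Real.summable_one_div_nat_pow.mpr one_lt_two)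
    simpa using this
  refine h.of_nonneg_of_le (fun m => by positivity) fun m => ?_
  unfold auxA
  split_ifs
  · rw [div_pow, one_pow]
  · rw [zero_pow two_ne_zero]; positivity

noncomputable def auxX (i : ℤ) : ℂ := if 0 ≤ i + 1 then ((auxA (i + 1).toNat : ℝ) : ℂ) else 0

lemma aux_inj : Function.Injective (fun m : ℕ => (m : ℤ) - 1) := by
  intro a b h; simpa using h

lemma auxX_mem : Memℓp auxX 2 := by
  apply memℓp_gen
  rw [← aux_inj.summable_iff]
  · refine auxA_summable.congr fun m => ?_
    simp [auxX]
  · intro i hi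
    have : ¬ 0 ≤ i + 1 := by
      intro h
      exact hi ⟨(i + 1).toNat, by simp; omega⟩
    simp [auxX, this]

/-- The bilateral weighted backward shift with weights
ω_n = (n+2)/(n+1) for n ≥ 0 and ω_n = (|n|-1)/|n| for n < 0 is
distributionally chaotic. -/
theorem stmt_6 (T : lp (fun _ : ℤ => ℂ) 2 →L[ℂ] lp (fun _ : ℤ => ℂ) 2)
    (ω : ℤ → ℝ)
    (hω : ∀ n : ℤ, ω n = if 0 ≤ n then (((n : ℝ) + 2) / ((n : ℝ) + 1))
      else (((|n| : ℤ) : ℝ) - 1) / ((|n| : ℤ) : ℝ))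
    (hT : ∀ n : ℤ, T (lp.single 2 n (1 : ℂ)) = ((ω n : ℝ) : ℂ) • lp.single 2 (n - 1) (1 : ℂ)) :
    DistributionallyChaotic (fun x => T x) := by
  have hcoord : ∀ (y : lp (fun _ : ℤ => ℂ) 2) (i : ℤ), T y i = (ω (i + 1) : ℂ) * y (i + 1) := by
    intro y i
    have h1 := lp.hasSum_single (p := 2) (by norm_num) y
    have h2 := (h1.mapL T).mapL (lp.evalCLM ℂ (fun _ : ℤ => ℂ) 2 i)
    have h3 : ∀ n, (lp.evalCLM ℂ (fun _ : ℤ => ℂ) 2 i) (T (lp.single 2 n (y n)))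
        = if n = i + 1 then (ω (i + 1) : ℂ) * y (i + 1) else 0 := by
      intro n
      have e : (lp.single 2 n (y n) : lp (fun _ : ℤ => ℂ) 2) = y n • lp.single 2 n (1 : ℂ) := by
        rw [← lp.single_smul]; simp
      rw [e, map_smul, hT, map_smul, map_smul]
      have e2 : (lp.evalCLM ℂ (fun _ : ℤ => ℂ) 2 i) (lp.single 2 (n - 1) (1 : ℂ))
          = if n = i + 1 then 1 else 0 := by
        change (lp.single 2 (n - 1) (1 : ℂ) : lp (fun _ : ℤ => ℂ) 2) i = _
        split_ifs with h
        · subst h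
          rw [show i + 1 - 1 = i by ring]
          exact lp.single_apply_self _ _ _
        · exact lp.single_apply_ne _ _ _ (by omega)
      rw [e2]
      split_ifs with h
      · subst h; simp [mul_comm]
      · simp
    simp only [h3] at h2
    exact h2.unique (hasSum_ite_eq _ _)
  set x : lp (fun _ : ℤ => ℂ) 2 := ⟨auxX, auxX_mem⟩ with hxdef
  have hxi : ∀ i, x i = auxX i := fun i => rfl
  have hk : ∀ (k : ℕ), (∀ m : ℕ, ((T ^ k) x) ((m : ℤ) - 1) =
      (((((m : ℝ) + 1 + k) / (m + 1)) * auxA (m + k) : ℝ) : ℂ)) ∧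
      ∀ i : ℤ, i < -1 → ((T ^ k) x) i = 0 := by
    intro k
    induction k with
    | zero =>
      constructor
      · intro m
        have : (m : ℝ) + 1 ≠ 0 := by positivity
        simp [hxi, auxX, this]
      · intro i hi
        have : ¬ 0 ≤ i + 1 := by omega
        simp [hxi, auxX, this]
    | succ k ih =>
      have hs : (T ^ (k + 1)) x = T ((T ^ k) x) := by
        rw [pow_succ']; rfl
      constructor
      · intro m
        have := ih.1 (m + 1)
        rw [hs, hcoord]
        rw [Nat.cast_succ] at this
        rw [show (m : ℤ) - 1 + 1 = (m : ℤ) + 1 - 1 by ring, this, hω]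
        rw [if_pos (by omega), show m + 1 + k = m + (k + 1) by ring]
        have h1 : (m : ℂ) + 1 ≠ 0 := by exact_mod_cast Nat.succ_ne_zero m
        have h2 : (m : ℂ) + 1 + 1 ≠ 0 := by exact_mod_cast Nat.succ_ne_zero (m + 1)
        push_cast
        have e1 : (m : ℂ) + 1 - 1 + 2 = m + 1 + 1 := by ring
        have e2 : (m : ℂ) + 1 - 1 + 1 = m + 1 := by ring
        rw [e1, e2]
        field_simp
        ring
      · intro i hi
        rw [hs, hcoord]
        rcases eq_or_ne i (-2) with rfl | h
        · rw [hω]; norm_num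
        · rw [ih.2 (i + 1) (by omega), mul_zero]
  apply aux_reduction T x
  · intro j k h1 h2
    have hmem : k ∈ auxS := ⟨j, h1, h2⟩
    have h3 := lp.norm_apply_le_norm (two_ne_zero) ((T ^ k) x) (((0 : ℕ) : ℤ) - 1)
    rw [(hk k).1 0] at h3
    refine le_trans (le_of_eq ?_) h3
    have : (k : ℝ) + 1 ≠ 0 := by positivity
    rw [Complex.norm_real, auxA, zero_add, if_pos hmem]
    rw [show (((0 : ℕ) : ℝ) + 1 + k) / ((0 : ℕ) + 1) * (1 / ((k : ℝ) + 1)) = 1 by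
      push_cast; field_simp; ring]
    simp
  · intro τ hτ
    have htail : Tendsto (fun k => ∑' m, auxA (m + k) ^ 2) atTop (𝓝 0) :=
      tendsto_sum_nat_add fun m => auxA m ^ 2
    have hev := htail.eventually_lt_const (show (0 : ℝ) < τ ^ 2 / 4 by positivity)
    obtain ⟨K, hK⟩ := eventually_atTop.mp hev
    filter_upwards [eventually_ge_atTop K] with j hj k h1 h2
    have hkK : K ≤ k := by
      have := Nat.self_le_factorial (2 * j + 1)
      omega
    have ht := hK k hkK
    have hnorm : ‖(T ^ k) x‖ ^ 2 = ∑' m : ℕ, ((((m : ℝ) + 1 + k) / (m + 1)) * auxA (m + k)) ^ 2 := by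
      have := lp.norm_rpow_eq_tsum (p := 2) (by norm_num) ((T ^ k) x)
      simp only [ENNReal.toReal_ofNat, Real.rpow_ofNat] at this
      rw [this, ← aux_inj.tsum_eq]
      · refine tsum_congr fun m => ?_
        rw [(hk k).1 m, Complex.norm_real, Real.norm_eq_abs, sq_abs]
      · intro i hi
        have : ¬ i < -1 := by
          intro h
          apply hi
          change ‖((T ^ k) x) i‖ ^ 2 = 0
          rw [(hk k).2 i h, norm_zero, zero_pow two_ne_zero]
        exact ⟨(i + 1).toNat, by simp; omega⟩
    have hsumm : Summable fun m => auxA (m + k) ^ 2 :=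
      (summable_nat_add_iff (f := fun m => auxA m ^ 2) k).mpr auxA_summable
    have hle : ∀ m : ℕ, ((((m : ℝ) + 1 + k) / (m + 1)) * auxA (m + k)) ^ 2
        ≤ 4 * auxA (m + k) ^ 2 := by
      intro m
      by_cases hm : m + k ∈ auxS
      · have h3 := auxS_gap j (m + k) hm (by omega)
        rw [Nat.factorial_succ] at h3
        have hkm : k ≤ m := by nlinarith
        have hkm' : (k : ℝ) ≤ m := by exact_mod_cast hkm
        rw [mul_pow]
        apply mul_le_mul_of_nonneg_right _ (sq_nonneg _)
        have h4 : ((m : ℝ) + 1 + k) / (m + 1) ≤ 2 := by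
          rw [div_le_iff₀ (by positivity)]; linarith
        have h5 : 0 ≤ ((m : ℝ) + 1 + k) / (m + 1) := by positivity
        nlinarith
      · simp [auxA, hm]
    have hfin : ‖(T ^ k) x‖ ^ 2 < τ ^ 2 := by
      rw [hnorm]
      calc _ ≤ ∑' m, 4 * auxA (m + k) ^ 2 :=
            Summable.tsum_le_tsum hle ((hsumm.mul_left 4).of_nonneg_of_le
              (fun m => sq_nonneg _) hle) (hsumm.mul_left 4)
        _ = 4 * ∑' m, auxA (m + k) ^ 2 := tsum_mul_left
        _ < τ ^ 2 := by linarith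
    exact lt_of_pow_lt_pow_left₀ 2 hτ.le hfin
end

section
/- Let T be the bounded linear operator on ℓ²(ℤ, ℂ) determined on the canonical orthonormal basis (e_n)_{n∈ℤ} by T e_n = ω_n e_{n−1}, where ω_n = (n+2)/(n+1) if n ≥ 0 and ω_n = (|n|−1)/|n| if n < 0. Then T is not norm-unimodal. -/
open Filter Topology MeasureTheory
open scoped Classical ENNReal

lemma shift_apply (T : lp (fun _ : ℤ => ℂ) 2 →L[ℂ] lp (fun _ : ℤ => ℂ) 2)
    (ω : ℤ → ℝ)
    (hT : ∀ n : ℤ, T (lp.single 2 n (1 : ℂ)) = ((ω n : ℝ) : ℂ) • lp.single 2 (n - 1) (1 : ℂ))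
    (x : lp (fun _ : ℤ => ℂ) 2) (j : ℤ) : (T x) j = (ω (j + 1) : ℂ) * x (j + 1) := by
  have h1 : HasSum (fun n : ℤ => lp.single 2 n (x n)) x := lp.hasSum_single (by norm_num) x
  have h2 := (h1.mapL T).mapL (lp.evalCLM ℂ (fun _ : ℤ => ℂ) 2 j)
  have h3 : ∀ n : ℤ, lp.evalCLM ℂ (fun _ : ℤ => ℂ) 2 j (T (lp.single 2 n (x n)))
      = if n = j + 1 then (ω (j + 1) : ℂ) * x (j + 1) else 0 := by
    intro n
    have e : (lp.single 2 n (x n) : lp (fun _ : ℤ => ℂ) 2) = x n • lp.single 2 n (1 : ℂ) := by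
      rw [← lp.single_smul]; simp
    rw [e, map_smul, hT, map_smul, map_smul]
    have e2 : lp.evalCLM ℂ (fun _ : ℤ => ℂ) 2 j (lp.single 2 (n - 1) (1 : ℂ))
        = (lp.single 2 (n - 1) (1 : ℂ) : lp (fun _ : ℤ => ℂ) 2) j := rfl
    rw [e2]
    split_ifs with hn
    · subst hn
      simp [mul_comm]
    · rw [lp.single_apply_ne]
      · simp
      · omega
  simp only [h3] at h2
  exact h2.unique (hasSum_ite_eq (j + 1) _)

lemma shift_norm_le (x y : lp (fun _ : ℤ => ℂ) 2) (i : ℤ) (C : ℝ) (hC : 0 ≤ C)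
    (h : ∀ j, ‖y j‖ ≤ C * ‖x (j + i)‖) : ‖y‖ ≤ C * ‖x‖ := by
  have p : 0 < (2 : ℝ≥0∞).toReal := by norm_num
  have hx := lp.hasSum_norm p x
  have hy := lp.hasSum_norm p y
  have hx' := ((Equiv.addRight i).hasSum_iff.mpr hx).mul_left (C ^ 2)
  have := hasSum_le (fun j => ?_) hy hx'
  · simp only [ENNReal.toReal_ofNat, Real.rpow_ofNat] at this
    rw [← mul_pow] at this
    exact le_of_sq_le_sq this (by positivity)
  · simp only [ENNReal.toReal_ofNat, Real.rpow_ofNat, Function.comp, Equiv.coe_addRight]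
    rw [← mul_pow]
    exact pow_le_pow_left₀ (norm_nonneg _) (h j) 2

lemma shift_pow_bound (T : lp (fun _ : ℤ => ℂ) 2 →L[ℂ] lp (fun _ : ℤ => ℂ) 2)
    (ω : ℤ → ℝ)
    (hω : ∀ n : ℤ, ω n = if 0 ≤ n then (((n : ℝ) + 2) / ((n : ℝ) + 1))
      else (((|n| : ℤ) : ℝ) - 1) / ((|n| : ℤ) : ℝ))
    (hT : ∀ n : ℤ, T (lp.single 2 n (1 : ℂ)) = ((ω n : ℝ) : ℂ) • lp.single 2 (n - 1) (1 : ℂ))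
    (x : lp (fun _ : ℤ => ℂ) 2) (i : ℕ) : ∀ j : ℤ,
    (-1 ≤ j → ‖((T ^ i) x) j‖ ≤ (j + i + 2) / (j + 2) * ‖x (j + i)‖) ∧
    (j < -1 → ‖((T ^ i) x) j‖ ≤ ‖x (j + i)‖) := by
  induction i with
  | zero =>
    intro j
    refine ⟨fun hj => ?_, fun hj => by simp⟩
    have : (-1 : ℝ) ≤ j := by exact_mod_cast hj
    have h2 : (j : ℝ) + 2 ≠ 0 := by linarith
    simp [div_self h2]
  | succ i ih =>
    intro j
    have e : (T ^ (i + 1)) x = T ((T ^ i) x) := by rw [pow_succ']; rfl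
    have e' : j + ((i + 1 : ℕ) : ℤ) = j + 1 + i := by push_cast; ring
    rw [e, shift_apply T ω hT, e', norm_mul, Complex.norm_real, Real.norm_eq_abs]
    constructor
    · intro hj
      have hj' : (-1 : ℝ) ≤ j := by exact_mod_cast hj
      have := (ih (j + 1)).1 (by omega)
      have hw : ω (j + 1) = (j + 3) / (j + 2) := by
        rw [hω, if_pos (by omega)]; push_cast; ring
      have h2 : (0 : ℝ) < j + 2 := by linarith
      have h3 : (0 : ℝ) < j + 3 := by linarith
      rw [hw, abs_of_pos (by positivity)]
      refine (mul_le_mul_of_nonneg_left this (by positivity)).trans (le_of_eq ?_)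
      have h4 : (j : ℝ) + 1 + 2 ≠ 0 := by linarith
      push_cast
      field_simp
      ring
    · intro hj
      have hw : |ω (j + 1)| ≤ 1 := by
        rw [hω, if_neg (by omega)]
        have : (1 : ℝ) ≤ ((|j + 1| : ℤ) : ℝ) := by
          exact_mod_cast Int.one_le_abs (by omega)
        rw [abs_of_nonneg (div_nonneg (by linarith) (by linarith)), div_le_one (by linarith)]
        linarith
      by_cases h : j = -2
      · subst h
        have : ω (-2 + 1) = 0 := by rw [hω]; norm_num
        rw [this]; simp
      · exact (mul_le_of_le_one_left (norm_nonneg _) hw).trans ((ih (j + 1)).2 (by omega))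

/-- The bilateral weighted backward shift with weights
ω_n = (n+2)/(n+1) for n ≥ 0 and ω_n = (|n|-1)/|n| for n < 0 is
not norm-unimodal. -/
theorem stmt_7 (T : lp (fun _ : ℤ => ℂ) 2 →L[ℂ] lp (fun _ : ℤ => ℂ) 2)
    (ω : ℤ → ℝ)
    (hω : ∀ n : ℤ, ω n = if 0 ≤ n then (((n : ℝ) + 2) / ((n : ℝ) + 1))
      else (((|n| : ℤ) : ℝ) - 1) / ((|n| : ℤ) : ℝ))
    (hT : ∀ n : ℤ, T (lp.single 2 n (1 : ℂ)) = ((ω n : ℝ) : ℂ) • lp.single 2 (n - 1) (1 : ℂ)) :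
    ¬ NormUnimodal T := by
  rintro ⟨r, hr, H⟩
  have key : ∀ i : ℕ, 1 ≤ i → r ^ i ≤ i + 1 := by
    intro i hi
    obtain ⟨x, hx, -, hb⟩ := H i
    have h1 := hb i hi le_rfl
    have h2 : ‖(T ^ i) x‖ ≤ ((i : ℝ) + 1) * ‖x‖ := by
      refine shift_norm_le x _ i _ (by positivity) (fun j => ?_)
      have hB := shift_pow_bound T ω hω hT x i j
      have hi0 : (0 : ℝ) ≤ i := by positivity
      by_cases hj : -1 ≤ j
      · have hj' : (-1 : ℝ) ≤ j := by exact_mod_cast hj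
        refine (hB.1 hj).trans (mul_le_mul_of_nonneg_right ?_ (norm_nonneg _))
        rw [div_le_iff₀ (by linarith)]
        nlinarith
      · refine (hB.2 (by omega)).trans (le_mul_of_one_le_left (norm_nonneg _) (by linarith))
    exact le_of_mul_le_mul_right (h1.trans h2) (norm_pos_iff.mpr hx)
  have ht := tendsto_pow_const_div_const_pow_of_one_lt 1 hr
  obtain ⟨n, hn, hn1⟩ := ((ht.eventually (gt_mem_nhds (show (0 : ℝ) < 1 / 2 by norm_num))).and
    (eventually_ge_atTop 1)).exists
  have hp : (0 : ℝ) < r ^ n := by positivity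
  rw [div_lt_iff₀ hp] at hn
  have := key n hn1
  have hn1' : (1 : ℝ) ≤ n := by exact_mod_cast hn1
  rw [pow_one] at hn
  linarith
end

section
/- Partition ℕ = {0,1,2,…} into consecutive finite blocks B_1, B_2, B_3, …, where B_k consists of exactly k consecutive integers (B_1 = {0}, B_2 = {1,2}, B_3 = {3,4,5}, and so on). Let T be the bounded linear operator on ℓ²(ℕ, ℂ) defined on the canonical orthonormal basis (e_j)_{j∈ℕ} by T e_j = 2 e_{j−1} if j and j−1 lie in the same block, and T e_j = 0 if j is the least element of its block. Then T is norm-unimodal. -/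
open Filter Topology MeasureTheory
open scoped Classical ENNReal

/-- Partition ℕ into consecutive blocks of sizes 1, 2, 3, …, so
that the least elements of the blocks are exactly the triangular numbers
k(k+1)/2.  The operator sending e_j to 2·e_{j-1} when j and j-1 lie in the
same block and e_j to 0 when j is the least element of its block is
norm-unimodal. -/
theorem stmt_8 (T : lp (fun _ : ℕ => ℂ) 2 →L[ℂ] lp (fun _ : ℕ => ℂ) 2)
    (hT : ∀ j : ℕ, T (lp.single 2 j (1 : ℂ)) =
      if ∃ k : ℕ, j = k * (k + 1) / 2 then 0
      else (2 : ℂ) • lp.single 2 (j - 1) (1 : ℂ)) :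
    NormUnimodal T := by
  have htri : ∀ a : ℕ, 2 * (a * (a + 1) / 2) = a * (a + 1) := fun a =>
    Nat.mul_div_cancel' (Nat.even_mul_succ_self a).two_dvd
  refine ⟨2, by norm_num, fun m => ?_⟩
  obtain ⟨t, ht⟩ : ∃ t, t = m * (m + 1) / 2 := ⟨_, rfl⟩
  have ht2 := htri m
  rw [← ht] at ht2
  have key : ∀ i : ℕ, i ≤ m → (T ^ i) (lp.single 2 (t + m) (1 : ℂ)) =
      (2 : ℂ) ^ i • lp.single 2 (t + m - i) (1 : ℂ) := by
    intro i
    induction i with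
    | zero => intro _; simp
    | succ i ih =>
      intro hi
      have hn : ¬ ∃ k : ℕ, t + m - i = k * (k + 1) / 2 := by
        rintro ⟨k, hk⟩
        have hk2 := htri k
        rw [← hk] at hk2
        obtain ⟨d, hd⟩ : ∃ d, m = i + 1 + d := ⟨m - (i + 1), by omega⟩
        have e : t + m - i = t + d + 1 := by omega
        rw [e] at hk2
        have h1 : m < k := by
          by_contra h
          have : k * (k + 1) ≤ m * (m + 1) := by gcongr <;> omega
          omega
        have h2 : (m + 1) * (m + 1 + 1) ≤ k * (k + 1) := by gcongr <;> omega
        nlinarith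
      rw [pow_succ', ContinuousLinearMap.mul_apply, ih (by omega), map_smul, hT, if_neg hn,
        smul_smul, pow_succ, Nat.sub_sub]
  have hz : (T ^ (m + 1)) (lp.single 2 (t + m) (1 : ℂ)) = 0 := by
    rw [pow_succ', ContinuousLinearMap.mul_apply, key m le_rfl, map_smul, hT,
      if_pos ⟨m, by omega⟩, smul_zero]
  have hnorm : ∀ j : ℕ, ‖(lp.single 2 j (1 : ℂ) : lp (fun _ : ℕ => ℂ) 2)‖ = 1 := by
    intro j
    rw [lp.norm_single (by norm_num)]
    simp
  refine ⟨lp.single 2 (t + m) (1 : ℂ), ?_, ?_, ?_⟩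
  · intro h
    have := hnorm (t + m)
    rw [h] at this
    simp at this
  · refine tendsto_const_nhds.congr' ?_
    filter_upwards [eventually_ge_atTop (m + 1)] with k hk
    obtain ⟨d, rfl⟩ := Nat.exists_eq_add_of_le' hk
    rw [pow_add, ContinuousLinearMap.mul_apply, hz]
    simp
  · intro i _ hi
    rw [key i hi, norm_smul, hnorm, hnorm]
    simp
end

section
/- Let H be a separable complex Hilbert space and let N be a bounded normal operator on H (i.e., N*N = NN*). Then N is not Li-Yorke chaotic (as a dynamical system on H with metric d(x,y) = ‖x − y‖). -/
open Filter Topology MeasureTheory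
open scoped Classical ENNReal

/-- A bounded normal operator on a separable complex Hilbert space
is not Li-Yorke chaotic. -/
theorem stmt_9 {H : Type*} [NormedAddCommGroup H] [InnerProductSpace ℂ H]
    [CompleteSpace H] [TopologicalSpace.SeparableSpace H]
    (N : H →L[ℂ] H)
    (hN : ContinuousLinearMap.adjoint N * N = N * ContinuousLinearMap.adjoint N) :
    ¬ LiYorkeChaotic (fun x => N x) := by
  rintro ⟨Γ, hΓ, h⟩
  have hnt : Γ.Nontrivial := by
    by_contra hc
    exact hΓ (Set.not_nontrivial_iff.mp hc).finite.countable
  obtain ⟨x, hx, y, hy, hxy⟩ := hnt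
  obtain ⟨h1, h2⟩ := h x hx y hy hxy
  set a : ℕ → ℝ := fun n => ‖(N ^ n) (x - y)‖ with ha
  have hit : ∀ (n : ℕ) (z : H), (fun x => N x)^[n] z = (N ^ n) z := by
    intro n
    induction n with
    | zero => intro z; simp
    | succ k ih => intro z; rw [Function.iterate_succ_apply, ih, pow_succ]; rfl
  have he : (fun n => edist ((fun x => N x)^[n] x) ((fun x => N x)^[n] y))
      = fun n => ENNReal.ofReal (a n) := by
    funext n
    rw [hit, hit, edist_dist, dist_eq_norm, ← map_sub]
  rw [he] at h1 h2
  have hnorm : ∀ u : H, ‖ContinuousLinearMap.adjoint N u‖ = ‖N u‖ := by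
    intro u
    have e : inner ℂ (ContinuousLinearMap.adjoint N u) (ContinuousLinearMap.adjoint N u)
        = inner ℂ (N u) (N u) := by
      rw [ContinuousLinearMap.adjoint_inner_left, ← ContinuousLinearMap.adjoint_inner_right]
      have := congrArg (fun T : H →L[ℂ] H => T u) hN
      simp only [ContinuousLinearMap.mul_apply] at this
      rw [this]
    rw [inner_self_eq_norm_sq_to_K, inner_self_eq_norm_sq_to_K] at e
    have e' : ‖ContinuousLinearMap.adjoint N u‖ ^ 2 = ‖N u‖ ^ 2 := by exact_mod_cast e
    exact (pow_left_inj₀ (norm_nonneg _) (norm_nonneg _) two_ne_zero).mp e'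
  have hlog : ∀ u : H, ‖N u‖ ^ 2 ≤ ‖N (N u)‖ * ‖u‖ := by
    intro u
    have e : inner ℂ (ContinuousLinearMap.adjoint N (N u)) u = inner ℂ (N u) (N u) :=
      ContinuousLinearMap.adjoint_inner_left _ _ _
    have e2 := norm_inner_le_norm (𝕜 := ℂ) (ContinuousLinearMap.adjoint N (N u)) u
    rw [e, hnorm, inner_self_eq_norm_sq_to_K] at e2
    simpa using e2
  have hs : ∀ n, (N ^ (n + 1)) (x - y) = N ((N ^ n) (x - y)) := by
    intro n; rw [pow_succ']; rfl
  have hconv : ∀ n, a (n + 1) ^ 2 ≤ a (n + 2) * a n := by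
    intro n
    simp only [ha]
    rw [hs (n + 1), hs n]
    exact hlog _
  have hnn : ∀ n, 0 ≤ a n := fun n => norm_nonneg _
  have hanti : Antitone a := by
    apply antitone_nat_of_succ_le
    intro n
    by_contra! hlt
    have hinc : ∀ k, a (n + k) < a (n + k + 1) ∧ a (n + 1) ≤ a (n + k + 1) := by
      intro k
      induction k with
      | zero => exact ⟨hlt, le_rfl⟩
      | succ k ih =>
        have hc := hconv (n + k)
        have h0 := hnn (n + k)
        have hk : a (n + k + 1) < a (n + k + 2) := by
          by_contra! hle
          nlinarith [mul_le_mul_of_nonneg_right hle h0]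
        exact ⟨hk, ih.2.trans hk.le⟩
    have hpos : 0 < a (n + 1) := (hnn n).trans_lt hlt
    have hge : ENNReal.ofReal (a (n + 1)) ≤
        Filter.liminf (fun n => ENNReal.ofReal (a n)) Filter.atTop := by
      apply Filter.le_liminf_of_le
      · isBoundedDefault
      · filter_upwards [Filter.eventually_ge_atTop (n + 1)] with m hm
        obtain ⟨k, rfl⟩ := Nat.exists_eq_add_of_le hm
        apply ENNReal.ofReal_le_ofReal
        have := (hinc k).2
        rwa [show n + 1 + k = n + k + 1 by omega]
    rw [h2] at hge
    exact absurd hge (not_le.mpr (ENNReal.ofReal_pos.mpr hpos))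
  have hanti' : Antitone (fun n => ENNReal.ofReal (a n)) :=
    fun i j hij => ENNReal.ofReal_le_ofReal (hanti hij)
  have ht := tendsto_atTop_iInf hanti'
  rw [ht.limsup_eq, ← ht.liminf_eq, h2] at h1
  exact lt_irrefl _ h1
end

section
/- Let H be a complex Hilbert space and let K be a compact linear operator on H. Then K is not Li-Yorke chaotic (as a dynamical system on H with metric d(x,y) = ‖x − y‖). -/
open Filter Topology MeasureTheory
open scoped Classical ENNReal

theorem aux_adjoint_compact {E : Type*} [NormedAddCommGroup E] [InnerProductSpace ℂ E]
    [CompleteSpace E] (T : E →L[ℂ] E) (hT : IsCompactOperator (⇑T)) :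
    IsCompactOperator (⇑(ContinuousLinearMap.adjoint T)) := by
  have hS : IsCompactOperator (⇑(T ∘L ContinuousLinearMap.adjoint T)) :=
    hT.comp_clm (ContinuousLinearMap.adjoint T)
  set S := T ∘L ContinuousLinearMap.adjoint T with hSdef
  have key : ∀ a : E, ‖ContinuousLinearMap.adjoint T a‖ ^ 2 ≤ ‖S a‖ * ‖a‖ := by
    intro a
    have h1 : inner ℂ (S a) a
        = inner ℂ (ContinuousLinearMap.adjoint T a) (ContinuousLinearMap.adjoint T a) := by
      rw [ContinuousLinearMap.adjoint_inner_right]; rfl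
    have h2 := norm_inner_le_norm (𝕜 := ℂ) (S a) a
    rw [h1, inner_self_eq_norm_sq_to_K] at h2
    simpa using h2
  refine (isCompactOperator_iff_isCompact_closure_image_closedBall
    (ContinuousLinearMap.adjoint T : E →ₗ[ℂ] E) one_pos).2 ?_
  have htb : TotallyBounded (S '' Metric.closedBall 0 1) :=
    ((hS.isCompact_closure_image_closedBall (f := (S : E →ₗ[ℂ] E)) 1).totallyBounded).subset
      subset_closure
  refine TotallyBounded.isCompact_of_isClosed (TotallyBounded.closure ?_) isClosed_closure
  rw [Metric.totallyBounded_iff]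
  intro ε hε
  obtain ⟨t, hts, htf, htc⟩ := (totallyBounded_iff_subset.1 htb)
    {p | dist p.1 p.2 < ε ^ 2 / 2} (Metric.dist_mem_uniformity (by positivity))
  obtain ⟨u, hu, huf, rfl⟩ := Set.exists_subset_image_finite_and.1 ⟨t, hts, htf, rfl⟩
  refine ⟨ContinuousLinearMap.adjoint T '' u, huf.image _, ?_⟩
  rintro _ ⟨a, ha, rfl⟩
  have := htc ⟨a, ha, rfl⟩
  simp only [Set.mem_iUnion, Set.mem_ofPred_eq] at this
  obtain ⟨_, ⟨b, hb, rfl⟩, hab⟩ := this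
  simp only [Set.mem_iUnion]
  refine ⟨_, ⟨b, hb, rfl⟩, ?_⟩
  have hb' := hu hb
  rw [Metric.mem_ball, dist_eq_norm]
  rw [dist_eq_norm, ← map_sub] at hab
  have hk := key (a - b)
  have hn : ‖a - b‖ ≤ 2 := by
    have := norm_sub_le a b
    simp at ha hb'
    linarith
  have h3 : ‖S (a - b)‖ * ‖a - b‖ ≤ ‖S (a - b)‖ * 2 := by gcongr
  have : ‖ContinuousLinearMap.adjoint T (a - b)‖ ^ 2 < ε ^ 2 := by linarith
  rw [map_sub] at this
  exact lt_of_pow_lt_pow_left₀ 2 hε.le this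

theorem aux_pow_tendsto {A : Type*} [NormedRing A] [NormedAlgebra ℂ A] [CompleteSpace A]
    (a : A) (h : spectralRadius ℂ a < 1) : Tendsto (fun n : ℕ => ‖a ^ n‖) atTop (𝓝 0) := by
  obtain ⟨r, hr, hr1⟩ := ENNReal.lt_iff_exists_nnreal_btwn.1 h
  have h1 := (spectrum.pow_nnnorm_pow_one_div_tendsto_nhds_spectralRadius a).eventually_lt_const hr
  have hr1' : (r : ℝ) < 1 := by exact_mod_cast hr1
  refine squeeze_zero' (Eventually.of_forall fun n => norm_nonneg _) ?_
    (tendsto_pow_atTop_nhds_zero_of_lt_one r.2 hr1')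
  filter_upwards [h1, eventually_ge_atTop 1] with n hn hn1
  have hn0 : (0 : ℝ) < n := by exact_mod_cast hn1
  have h2 := ENNReal.rpow_le_rpow hn.le hn0.le
  rw [← ENNReal.rpow_mul, one_div, inv_mul_cancel₀ hn0.ne', ENNReal.rpow_one,
    ENNReal.rpow_natCast] at h2
  exact_mod_cast h2

theorem aux_cyclic {E : Type*} [NormedAddCommGroup E] [InnerProductSpace ℂ E]
    [CompleteSpace E] (T : E →L[ℂ] E) (hT : IsCompactOperator (⇑T)) (x : E)
    (hx : ∀ y : E, (∀ n : ℕ, inner ℂ y ((T ^ n) x) = 0) → y = 0)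
    (hl : ∀ ε > 0, ∃ n : ℕ, ‖(T ^ n) x‖ < ε) :
    Tendsto (fun n : ℕ => ‖(T ^ n) x‖) atTop (𝓝 0) := by
  rcases subsingleton_or_nontrivial E with hE | hE
  · simp [Subsingleton.elim _ (0 : E)]
  have hs : spectralRadius ℂ T < 1 := by
    refine spectrum.spectralRadius_lt_of_forall_lt (r := 1) T ?_
    intro z hz
    by_contra! hz1
    have hz1' : 1 ≤ ‖z‖ := by exact_mod_cast hz1
    have hz0 : star z ≠ 0 := by
      intro h
      rw [star_eq_zero] at h
      simp [h] at hz1'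
      linarith
    have hz' : star z ∈ spectrum ℂ (ContinuousLinearMap.adjoint T) := by
      rw [← ContinuousLinearMap.star_eq_adjoint, spectrum.map_star]
      simpa using hz
    have he := ((aux_adjoint_compact T hT).hasEigenvalue_iff_mem_spectrum hz0).2 hz'
    obtain ⟨y, hy⟩ := he.exists_hasEigenvector
    have hy1 : ContinuousLinearMap.adjoint T y = star z • y := hy.apply_eq_smul
    have hstep : ∀ v : E, inner ℂ y (T v) = z * inner ℂ y v := by
      intro v
      rw [← ContinuousLinearMap.adjoint_inner_left, hy1, inner_smul_left]
      simp
    have hpow : ∀ n : ℕ, inner ℂ y ((T ^ n) x) = z ^ n * inner ℂ y x := by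
      intro n
      induction n with
      | zero => simp
      | succ k ih =>
        rw [pow_succ', mul_apply_eq_comp, hstep, ih]
        ring
    have hyx : inner ℂ y x = 0 := by
      by_contra hne
      have hpos : 0 < ‖inner ℂ y x‖ := norm_pos_iff.2 hne
      have hyn : 0 < ‖y‖ := norm_pos_iff.2 hy.2
      obtain ⟨n, hn⟩ := hl (‖inner ℂ y x‖ / ‖y‖) (by positivity)
      rw [lt_div_iff₀ hyn] at hn
      have h1 := norm_inner_le_norm (𝕜 := ℂ) y ((T ^ n) x)
      rw [hpow, norm_mul, norm_pow] at h1
      have h2 : 1 ≤ ‖z‖ ^ n := one_le_pow₀ hz1'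
      nlinarith
    exact hy.2 (hx y fun n => by rw [hpow, hyx, mul_zero])
  have h := (aux_pow_tendsto T hs).mul_const ‖x‖
  rw [zero_mul] at h
  exact squeeze_zero (fun n => norm_nonneg _) (fun n => (T ^ n).le_opNorm x) h

theorem aux_general {H : Type*} [NormedAddCommGroup H] [InnerProductSpace ℂ H]
    [CompleteSpace H] (K : H →L[ℂ] H) (hK : IsCompactOperator (⇑K)) (x : H)
    (hl : ∀ ε > 0, ∃ n : ℕ, ‖(K ^ n) x‖ < ε) :
    Tendsto (fun n : ℕ => ‖(K ^ n) x‖) atTop (𝓝 0) := by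
  set M := (Submodule.span ℂ (Set.range fun n : ℕ => (K ^ n) x)).topologicalClosure with hM
  have hMc : IsClosed (M : Set H) := Submodule.isClosed_topologicalClosure _
  have horb : ∀ n : ℕ, (K ^ n) x ∈ M := fun n =>
    Submodule.le_topologicalClosure _ (Submodule.subset_span ⟨n, rfl⟩)
  have hleast : ∀ N : Submodule ℂ H, IsClosed (N : Set H) → (∀ n : ℕ, (K ^ n) x ∈ N) → M ≤ N := by
    intro N hN h
    refine Submodule.topologicalClosure_minimal _ (Submodule.span_le.2 ?_) hN
    rintro _ ⟨n, rfl⟩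
    exact h n
  have hinv : ∀ v ∈ M, K v ∈ M := by
    refine hleast (M.comap (K : H →ₗ[ℂ] H)) (hMc.preimage K.continuous) fun n => ?_
    have := horb (n + 1)
    rw [pow_succ', mul_apply_eq_comp] at this
    exact this
  have : CompleteSpace M := hMc.completeSpace_coe
  let T : M →L[ℂ] M := (K ∘L M.subtypeL).codRestrict M fun v => hinv v v.2
  have hT : IsCompactOperator (⇑T) :=
    (hK.comp_clm M.subtypeL).codRestrict (fun v => hinv v v.2) hMc
  let x' : M := ⟨x, by simpa using horb 0⟩
  have hpow : ∀ n : ℕ, ((T ^ n) x' : H) = (K ^ n) x := by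
    intro n
    induction n with
    | zero => simp [x']
    | succ k ih =>
      rw [pow_succ', pow_succ', mul_apply_eq_comp, mul_apply_eq_comp, ← ih]
      rfl
  have hnorm : ∀ n : ℕ, ‖(T ^ n) x'‖ = ‖(K ^ n) x‖ := fun n => by rw [← hpow]; rfl
  have := aux_cyclic T hT x' ?_ (by simpa only [hnorm] using hl)
  · simpa only [hnorm] using this
  · intro y hy
    have hle : M ≤ (ℂ ∙ (y : H))ᗮ := by
      refine hleast _ (Submodule.isClosed_orthogonal _) fun n => ?_
      rw [Submodule.mem_orthogonal_singleton_iff_inner_right, ← hpow]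
      exact hy n
    have h0 := hle y.2
    rw [Submodule.mem_orthogonal_singleton_iff_inner_right, inner_self_eq_zero] at h0
    exact Subtype.ext h0

/-- A compact linear operator on a complex Hilbert space is not
Li-Yorke chaotic. -/
theorem stmt_11 {H : Type*} [NormedAddCommGroup H] [InnerProductSpace ℂ H]
    [CompleteSpace H]
    (K : H →L[ℂ] H) (hK : IsCompactOperator (⇑K)) :
    ¬ LiYorkeChaotic (fun x => K x) := by
  rintro ⟨Γ, hΓ, hp⟩
  have hnt : Γ.Nontrivial := by
    by_contra h
    exact hΓ (Set.not_nontrivial_iff.1 h).countable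
  obtain ⟨x, hx, y, hy, hxy⟩ := hnt
  obtain ⟨h1, h2⟩ := hp x hx y hy hxy
  have hit : ∀ (n : ℕ) (v : H), (fun x => K x)^[n] v = (K ^ n) v := by
    intro n v
    rw [FunLike.coe_pow_eq_iterate]
  have hed : ∀ n : ℕ, edist ((fun x => K x)^[n] x) ((fun x => K x)^[n] y)
      = ENNReal.ofReal ‖(K ^ n) (x - y)‖ := by
    intro n
    rw [hit, hit, edist_dist, dist_eq_norm, map_sub]
  simp only [hed] at h1 h2
  have hl : ∀ ε > 0, ∃ n : ℕ, ‖(K ^ n) (x - y)‖ < ε := by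
    intro ε hε
    have h3 : liminf (fun n : ℕ => ENNReal.ofReal ‖(K ^ n) (x - y)‖) atTop < ENNReal.ofReal ε := by
      rw [h2]; exact ENNReal.ofReal_pos.2 hε
    obtain ⟨n, hn⟩ := (frequently_lt_of_liminf_lt (by isBoundedDefault) h3).exists
    exact ⟨n, (ENNReal.ofReal_lt_ofReal_iff hε).1 hn⟩
  have h4 := ENNReal.tendsto_ofReal (aux_general K hK (x - y) hl)
  rw [h4.limsup_eq, ENNReal.ofReal_zero] at h1
  exact lt_irrefl _ h1
end

section
/- Let H be a complex Hilbert space, let K be a compact linear operator on H, and let λ ∈ ℂ. Then the operator λI + K is not norm-unimodal. -/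
open Filter Topology MeasureTheory
open scoped Classical ENNReal

open scoped NNReal in
lemma aux_pow_lt {A : Type*} [NormedRing A] [NormedAlgebra ℂ A] [CompleteSpace A] (a : A)
    {s : ℝ≥0} (h : spectralRadius ℂ a < s) : ∀ᶠ n : ℕ in atTop, ‖a ^ n‖ < (s : ℝ) ^ n := by
  have h1 := spectrum.pow_nnnorm_pow_one_div_tendsto_nhds_spectralRadius a
  filter_upwards [h1.eventually_lt_const h, eventually_ge_atTop 1] with n hn hn1
  have hn0 : (0 : ℝ) < n := by exact_mod_cast hn1
  have h2 := ENNReal.rpow_lt_rpow hn hn0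
  rw [← ENNReal.rpow_mul, one_div_mul_cancel hn0.ne', ENNReal.rpow_one, ENNReal.rpow_natCast] at h2
  have h3 : ‖a ^ n‖₊ < s ^ n := by exact_mod_cast h2
  exact_mod_cast h3

lemma aux_adjoint {H : Type*} [NormedAddCommGroup H] [InnerProductSpace ℂ H]
    [CompleteSpace H] (K : H →L[ℂ] H) (hK : IsCompactOperator (⇑K)) :
    IsCompactOperator (⇑(ContinuousLinearMap.adjoint K)) := by
  have hc : IsCompactOperator (⇑(K ∘L ContinuousLinearMap.adjoint K)) := hK.comp_clm _
  have h1 := hc.isCompact_closure_image_closedBall (𝕜₁ := ℂ) (f := ((K ∘L ContinuousLinearMap.adjoint K : H →L[ℂ] H) : H →ₗ[ℂ] H)) 1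
  refine (isCompactOperator_iff_isCompact_closure_image_closedBall (𝕜₁ := ℂ)
    ((ContinuousLinearMap.adjoint K : H →L[ℂ] H) : H →ₗ[ℂ] H) one_pos).2 ?_
  have h2 : TotallyBounded ((fun x => (K ∘L ContinuousLinearMap.adjoint K) x) '' Metric.closedBall (0:H) 1) :=
    h1.totallyBounded.subset subset_closure
  refine TotallyBounded.isCompact_of_isClosed (TotallyBounded.closure ?_) isClosed_closure
  rw [Metric.totallyBounded_iff] at *
  intro ε hε
  obtain ⟨t, ht, hts⟩ := (Metric.totallyBounded_iff.2 h2).exists_subset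
      (Metric.dist_mem_uniformity (show (0:ℝ) < ε ^ 2 / 4 by positivity))
  obtain ⟨htf, hcov⟩ := hts
  have ht' : ∀ y : H, y ∈ t → ∃ x : H, x ∈ Metric.closedBall (0:H) 1 ∧
      (K ∘L ContinuousLinearMap.adjoint K) x = y := fun y hy => ht hy
  choose! g hg1 hg2 using ht'
  refine ⟨(fun y => ContinuousLinearMap.adjoint K (g y)) '' t, htf.image _, ?_⟩
  rintro _ ⟨x, hx, rfl⟩
  have h3 := hcov (Set.mem_image_of_mem _ hx)
  simp only [Set.mem_iUnion, Set.mem_ofPred_eq, exists_prop] at h3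
  obtain ⟨y, hy, hxy⟩ := h3
  simp only [Set.mem_iUnion, exists_prop, Set.exists_mem_image]
  refine ⟨y, hy, ?_⟩
  rw [← hg2 y hy] at hxy
  have hgx : ‖x - g y‖ ≤ 2 := by
    have := norm_sub_le x (g y)
    have h4 := hg1 y hy
    simp at h4 hx
    linarith
  change dist (ContinuousLinearMap.adjoint K x) (ContinuousLinearMap.adjoint K (g y)) < ε
  change dist ((K ∘L ContinuousLinearMap.adjoint K) x) ((K ∘L ContinuousLinearMap.adjoint K) (g y)) < _ at hxy
  rw [dist_eq_norm, ← map_sub] at *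
  set u := x - g y
  have h5 : ‖ContinuousLinearMap.adjoint K u‖ ^ 2 ≤ ‖(K ∘L ContinuousLinearMap.adjoint K) u‖ * ‖u‖ := by
    rw [← inner_self_eq_norm_sq (𝕜 := ℂ), ContinuousLinearMap.adjoint_inner_right]
    exact (Complex.re_le_norm _).trans (norm_inner_le_norm _ _)
  have h6 : ‖(K ∘L ContinuousLinearMap.adjoint K) u‖ * ‖u‖ ≤ ε^2/4 * 2 :=
    mul_le_mul hxy.le hgx (norm_nonneg _) (by positivity)
  refine lt_of_pow_lt_pow_left₀ 2 hε.le ?_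
  nlinarith [sq_pos_of_pos hε]

lemma aux_spec {H : Type*} [NormedAddCommGroup H] [InnerProductSpace ℂ H]
    [CompleteSpace H] (T K : H →L[ℂ] H) (hK : IsCompactOperator (⇑K)) (lam : ℂ) (hl : ‖lam‖ ≤ 1)
    (hT : T = lam • (1 : H →L[ℂ] H) + K)
    (hD : Dense {x : H | Tendsto (fun k => (T ^ k) x) atTop (𝓝 0)}) :
    ∀ z ∈ spectrum ℂ T, ‖z‖ ≤ 1 := by
  intro z hz
  by_contra! hz1
  have h1 : star z ∈ spectrum ℂ (star T) := by
    rw [spectrum.map_star]; simpa using hz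
  have h2 : star T = star K + algebraMap ℂ _ (star lam) := by
    rw [hT, star_add, star_smul, star_one, Algebra.algebraMap_eq_smul_one, add_comm]
  have h3 : star z - star lam ∈ spectrum ℂ (star K) := by
    rw [h2] at h1
    have := (spectrum.add_mem_add_iff (a := star K) (r := star z - star lam) (s := star lam)).1
    apply this
    simpa [add_comm] using h1
  have hne : star z - star lam ≠ 0 := by
    intro h
    rw [sub_eq_zero] at h
    have := star_injective h
    rw [this] at hz1
    linarith
  have hc : IsCompactOperator (⇑(star K)) := aux_adjoint K hK
  obtain ⟨v, hv⟩ := ((hc.hasEigenvalue_iff_mem_spectrum hne).2 h3).exists_hasEigenvector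
  have hv0 := hv.2
  have hv1 : (star K) v = (star z - star lam) • v := hv.apply_eq_smul
  have hv2 : (ContinuousLinearMap.adjoint T) v = star z • v := by
    change (star T) v = _
    rw [h2]
    simp [hv1, Algebra.algebraMap_eq_smul_one, sub_smul]
  have hpow : ∀ (k : ℕ) (x : H), inner ℂ v ((T ^ k) x) = z ^ k * inner ℂ v x := by
    intro k
    induction k with
    | zero => simp
    | succ k ih =>
      intro x
      rw [pow_succ, mul_apply_eq_comp, ih, ← ContinuousLinearMap.adjoint_inner_left, hv2,
        inner_smul_left]
      simp [pow_succ, mul_assoc]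
  have hzero : ∀ x ∈ {x : H | Tendsto (fun k => (T ^ k) x) atTop (𝓝 0)}, inner ℂ v x = 0 := by
    intro x hx
    have h4 : Tendsto (fun k => ‖inner ℂ v ((T ^ k) x)‖) atTop (𝓝 0) := by
      have : Tendsto (fun k => inner ℂ v ((T ^ k) x)) atTop (𝓝 (inner ℂ v 0)) :=
        Tendsto.inner tendsto_const_nhds hx
      simpa using this.norm
    have h5 : ‖inner ℂ v x‖ ≤ 0 := by
      refine ge_of_tendsto' h4 fun k => ?_
      rw [hpow, norm_mul, norm_pow]
      exact le_mul_of_one_le_left (norm_nonneg _) (one_le_pow₀ hz1.le)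
    exact norm_le_zero_iff.1 h5
  have hcl : IsClosed {x : H | inner ℂ v x = 0} :=
    isClosed_eq (by fun_prop) continuous_const
  have hall := hcl.closure_subset_iff.2 hzero (hD v)
  exact hv0 (inner_self_eq_zero.1 hall)

lemma aux_core {H : Type*} [NormedAddCommGroup H] [InnerProductSpace ℂ H]
    [CompleteSpace H] (T K : H →L[ℂ] H) (hK : IsCompactOperator (⇑K)) (lam : ℂ) (hl : ‖lam‖ ≤ 1)
    (hT : T = lam • (1 : H →L[ℂ] H) + K)
    (hD : Dense {x : H | Tendsto (fun k => (T ^ k) x) atTop (𝓝 0)}) (r : ℝ) (hr : 1 < r) :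
    ∃ N : ℕ, 1 ≤ N ∧ ∀ x, x ≠ 0 → ‖(T ^ N) x‖ < r ^ N * ‖x‖ := by
  have h := aux_spec T K hK lam hl hT hD
  lift r to NNReal using by linarith
  have hs : spectralRadius ℂ T < r := by
    refine lt_of_le_of_lt (b := 1) ?_ (by exact_mod_cast hr)
    refine iSup₂_le fun z hz => ?_
    have := h z hz
    exact_mod_cast this
  obtain ⟨N, hN, hN1⟩ := ((aux_pow_lt T hs).and (eventually_ge_atTop 1)).exists
  refine ⟨N, hN1, fun x hx => ?_⟩
  exact ((T ^ N).le_opNorm x).trans_lt (mul_lt_mul_of_pos_right hN (norm_pos_iff.2 hx))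

lemma aux_chain {H : Type*} [NormedAddCommGroup H] [InnerProductSpace ℂ H]
    [CompleteSpace H] (K : H →L[ℂ] H) (hK : IsCompactOperator (⇑K)) (lam : ℂ) (hl : 1 < ‖lam‖) :
    ∃ F : Submodule ℂ H, FiniteDimensional ℂ F ∧
      (∀ x ∈ F, (lam • (1 : H →L[ℂ] H) + K) x ∈ F) ∧
      ∀ e ∈ Fᗮ, ∀ μ : ℂ, ‖μ‖ ≤ 1 → (lam • (1 : H →L[ℂ] H) + K) e - μ • e ∈ F → e = 0 := by
  set T := lam • (1 : H →L[ℂ] H) + K with hT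
  by_contra! hcon
  have hcon' : ∀ F : {F : Submodule ℂ H // FiniteDimensional ℂ F ∧ ∀ x ∈ F, T x ∈ F},
      ∃ e : H, e ∈ F.1ᗮ ∧ ‖e‖ = 1 ∧ ∃ μ : ℂ, ‖μ‖ ≤ 1 ∧ T e - μ • e ∈ F.1 := by
    rintro ⟨F, hF1, hF2⟩
    obtain ⟨e, he, μ, hμ, h1, h2⟩ := hcon F hF1 hF2
    refine ⟨((‖e‖⁻¹ : ℝ) : ℂ) • e, Submodule.smul_mem _ _ he, ?_, μ, hμ, ?_⟩
    · simp [norm_smul, h2]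
    · rw [map_smul, smul_comm, ← smul_sub]
      exact Submodule.smul_mem _ _ h1
  choose e he hn μ hμ hTe using hcon'
  let nxt : {F : Submodule ℂ H // FiniteDimensional ℂ F ∧ ∀ x ∈ F, T x ∈ F} →
      {F : Submodule ℂ H // FiniteDimensional ℂ F ∧ ∀ x ∈ F, T x ∈ F} := fun F =>
    ⟨F.1 ⊔ Submodule.span ℂ {e F}, by
      have := F.2.1
      infer_instance, by
      have h1 : F.1 ⊔ Submodule.span ℂ {e F} ≤
          (F.1 ⊔ Submodule.span ℂ {e F}).comap (T : H →ₗ[ℂ] H) := by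
        refine sup_le (fun x hx => ?_) ?_
        · exact Submodule.mem_sup_left (F.2.2 x hx)
        · rw [Submodule.span_singleton_le_iff_mem]
          change T (e F) ∈ F.1 ⊔ Submodule.span ℂ {e F}
          rw [← sub_add_cancel (T (e F)) (μ F • e F)]
          exact Submodule.add_mem_sup (hTe F)
            (Submodule.smul_mem _ _ (Submodule.mem_span_singleton_self _))
      exact fun x hx => h1 hx⟩
  let S : ℕ → {F : Submodule ℂ H // FiniteDimensional ℂ F ∧ ∀ x ∈ F, T x ∈ F} := fun n =>
    nxt^[n] ⟨⊥, inferInstance, by simp⟩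
  have hS : ∀ n, S (n + 1) = nxt (S n) := fun n => Function.iterate_succ_apply' _ _ _
  have hmono : Monotone fun n => (S n).1 := monotone_nat_of_le_succ fun n => by
    rw [hS]; exact le_sup_left
  have hmem : ∀ n, e (S n) ∈ (S (n + 1)).1 := fun n => by
    rw [hS]; exact Submodule.mem_sup_right (Submodule.mem_span_singleton_self _)
  have hlt : ∀ i j, i < j → inner ℂ (e (S i)) (e (S j)) = 0 := fun i j hij => by
    have h1 : (S (i + 1)).1 ≤ (S j).1 := hmono (Nat.succ_le_of_lt hij)
    exact (Submodule.mem_orthogonal (𝕜 := ℂ) _ _).1 (he (S j)) _ (h1 (hmem i))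
  have hon : Orthonormal ℂ fun n => e (S n) := by
    refine ⟨fun n => hn _, fun i j hij => ?_⟩
    rcases lt_or_gt_of_ne hij with h | h
    · exact hlt i j h
    · exact inner_eq_zero_symm.1 (hlt j i h)
  have hin : ∀ n, ‖lam‖ - 1 ≤ ‖inner ℂ (e (S n)) (K (e (S n)))‖ := by
    intro n
    have h0 : inner ℂ (e (S n)) (T (e (S n)) - μ (S n) • e (S n)) = 0 :=
      inner_eq_zero_symm.1 ((Submodule.mem_orthogonal (𝕜 := ℂ) _ _).1 (he (S n)) _ (hTe (S n)))
    have h1 : inner ℂ (e (S n)) (e (S n)) = (1 : ℂ) := by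
      rw [inner_self_eq_norm_sq_to_K, hn]; simp
    have h2 : inner ℂ (e (S n)) (K (e (S n))) = μ (S n) - lam := by
      rw [hT] at h0
      simp only [add_apply, smul_apply,
        one_apply_eq_self, inner_sub_right, inner_add_right, inner_smul_right, h1] at h0
      linear_combination h0
    rw [h2, norm_sub_rev]
    have := norm_sub_norm_le lam (μ (S n))
    have := hμ (S n)
    linarith
  have hcomp := hK.isCompact_closure_image_closedBall (𝕜₁ := ℂ) (f := (K : H →ₗ[ℂ] H)) 1
  obtain ⟨y, -, φ, hφ, hy⟩ := hcomp.tendsto_subseq (x := fun n => K (e (S n))) (fun n =>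
    subset_closure ⟨e (S n), by simp [hn], rfl⟩)
  have hb : Tendsto (fun n => ‖inner ℂ (e (S n)) y‖) atTop (𝓝 0) := by
    have h1 := (hon.inner_products_summable y).tendsto_atTop_zero
    have h2 := h1.sqrt
    simpa using h2
  have hd : Tendsto (fun n => ‖K (e (S (φ n))) - y‖) atTop (𝓝 0) := by
    simpa using (hy.sub_const y).norm
  have hsum := (hb.comp hφ.tendsto_atTop).add hd
  rw [add_zero] at hsum
  have : ‖lam‖ - 1 ≤ 0 := by
    refine ge_of_tendsto' hsum fun n => (hin (φ n)).trans ?_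
    have h1 : inner ℂ (e (S (φ n))) (K (e (S (φ n)))) =
        inner ℂ (e (S (φ n))) y + inner ℂ (e (S (φ n))) (K (e (S (φ n))) - y) := by
      rw [← inner_add_right]; simp
    rw [h1]
    refine (norm_add_le _ _).trans (add_le_add le_rfl ?_)
    refine (norm_inner_le_norm _ _).trans ?_
    rw [hn, one_mul]
  linarith

lemma aux_expand {H : Type*} [NormedAddCommGroup H] [InnerProductSpace ℂ H]
    [CompleteSpace H] (T K : H →L[ℂ] H) (hK : IsCompactOperator (⇑K)) (lam : ℂ) (hl : 1 < ‖lam‖)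
    (hT : T = lam • (1 : H →L[ℂ] H) + K)
    (hev : ∀ e : H, ∀ μ : ℂ, ‖μ‖ ≤ 1 → T e = μ • e → e = 0)
    (x : H) (hx : Tendsto (fun k => (T ^ k) x) atTop (𝓝 0)) : x = 0 := by
  by_contra hx0
  have : Nontrivial H := ⟨x, 0, hx0⟩
  have hres : ∀ z ∈ spectrum ℂ T, 1 < ‖z‖ := by
    intro z hz
    by_contra! hz1
    have h2 : T = K + algebraMap ℂ _ lam := by
      rw [hT, Algebra.algebraMap_eq_smul_one, add_comm]
    have h3 : z - lam ∈ spectrum ℂ K := by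
      rw [h2] at hz
      apply (spectrum.add_mem_add_iff (a := K) (r := z - lam) (s := lam)).1
      simpa [add_comm] using hz
    have hne : z - lam ≠ 0 := by
      intro h
      rw [sub_eq_zero] at h
      rw [h] at hz1
      linarith
    obtain ⟨v, hv⟩ := ((hK.hasEigenvalue_iff_mem_spectrum hne).2 h3).exists_hasEigenvector
    have hv1 : K v = (z - lam) • v := hv.apply_eq_smul
    refine hv.2 (hev v z hz1 ?_)
    rw [hT]
    simp [hv1, sub_smul]
  have hu : IsUnit T := by
    by_contra h
    have := hres 0 (spectrum.zero_mem_iff ℂ |>.2 h)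
    simp at this
    linarith
  obtain ⟨u, rfl⟩ := hu
  have hs : spectralRadius ℂ (↑u⁻¹ : H →L[ℂ] H) < ((1 : NNReal) : ENNReal) := by
    refine spectrum.spectralRadius_lt_of_forall_lt _ fun z hz => ?_
    rw [← spectrum.map_inv, Set.mem_inv] at hz
    have h1 := hres _ hz
    rw [norm_inv] at h1
    have : ‖z‖ < 1 := by
      by_contra! h
      exact absurd (inv_le_one_of_one_le₀ h) (not_le.2 h1)
    exact_mod_cast this
  have hb := aux_pow_lt _ hs
  have h0 : ‖x‖ ≤ 0 := by
    have hx' := hx.norm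
    rw [norm_zero] at hx'
    refine ge_of_tendsto hx' ?_
    filter_upwards [hb] with k hk
    have h1 : x = ((↑u⁻¹ : H →L[ℂ] H) ^ k) (((u : H →L[ℂ] H) ^ k) x) := by
      rw [← mul_apply_eq_comp, ← Units.val_pow_eq_pow_val, ← Units.val_pow_eq_pow_val,
        ← Units.val_mul, inv_pow, inv_mul_cancel]
      simp
    calc ‖x‖ = ‖((↑u⁻¹ : H →L[ℂ] H) ^ k) (((u : H →L[ℂ] H) ^ k) x)‖ := by rw [← h1]
      _ ≤ ‖(↑u⁻¹ : H →L[ℂ] H) ^ k‖ * ‖((u : H →L[ℂ] H) ^ k) x‖ := ContinuousLinearMap.le_opNorm _ _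
      _ ≤ 1 * ‖((u : H →L[ℂ] H) ^ k) x‖ := by
        gcongr
        simpa using hk.le
      _ = _ := one_mul _
  exact hx0 (norm_le_zero_iff.1 h0)

lemma aux_fin {H : Type*} [NormedAddCommGroup H] [InnerProductSpace ℂ H]
    [CompleteSpace H] (K : H →L[ℂ] H) (hK : IsCompactOperator (⇑K)) (lam : ℂ) (hl : 1 < ‖lam‖) :
    ∃ F : Submodule ℂ H, FiniteDimensional ℂ F ∧ ∀ x : H,
      Tendsto (fun k => ((lam • (1 : H →L[ℂ] H) + K) ^ k) x) atTop (𝓝 0) → x ∈ F := by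
  obtain ⟨F, hF, hinv, hev⟩ := aux_chain K hK lam hl
  refine ⟨F, hF, fun x hx => ?_⟩
  set T := lam • (1 : H →L[ℂ] H) + K with hT
  let P : H →L[ℂ] Fᗮ := Fᗮ.orthogonalProjectionOnto
  have hPker : ∀ v, P v = 0 ↔ v ∈ F := fun v => by
    rw [Submodule.orthogonalProjectionOnto_eq_zero_iff, Submodule.orthogonal_orthogonal]
  have hPid : ∀ v : Fᗮ, P v = v := fun v => Submodule.orthogonalProjectionOnto_mem_subspace_eq_self v
  let K' : Fᗮ →L[ℂ] Fᗮ := P ∘L (K ∘L Fᗮ.subtypeL)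
  let T' : Fᗮ →L[ℂ] Fᗮ := P ∘L (T ∘L Fᗮ.subtypeL)
  have hK' : IsCompactOperator (⇑K') := (hK.comp_clm Fᗮ.subtypeL).clm_comp P
  have hT' : T' = lam • (1 : Fᗮ →L[ℂ] Fᗮ) + K' := by
    ext1 v
    simp [T', K', hT, hPid]
  have hsub : ∀ v, v - (P v : H) ∈ F := fun v => by
    rw [← hPker, map_sub, hPid, sub_self]
  have hPT : ∀ v, T' (P v) = P (T v) := by
    intro v
    have h1 := (hPker _).2 (hinv _ (hsub v))
    rw [map_sub, map_sub, sub_eq_zero] at h1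
    exact h1.symm
  have hPTk : ∀ (k : ℕ) (v : H), (T' ^ k) (P v) = P ((T ^ k) v) := by
    intro k
    induction k with
    | zero => simp
    | succ k ih =>
      intro v
      rw [pow_succ, pow_succ, mul_apply_eq_comp, mul_apply_eq_comp, hPT, ih]
  rw [← hPker]
  refine aux_expand T' K' hK' lam hl hT' ?_ (P x) ?_
  · intro e μ hμ h
    have h1 : T e - μ • (e : H) ∈ F := by
      rw [← hPker, map_sub, map_smul, hPid, sub_eq_zero]
      exact h
    exact Subtype.ext (hev e e.2 μ hμ h1)
  · simp only [hPTk]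
    have h1 := (P.continuous.tendsto 0).comp hx
    rw [map_zero] at h1
    exact h1

theorem aux_main {H : Type*} [NormedAddCommGroup H] [InnerProductSpace ℂ H]
    [CompleteSpace H]
    (K : H →L[ℂ] H) (hK : IsCompactOperator (⇑K)) (lam : ℂ) (r : ℝ) (hr : 1 < r)
    (hm : ∀ m : ℕ, ∃ x : H, x ≠ 0 ∧
    Filter.Tendsto (fun k => ‖((lam • (1 : H →L[ℂ] H) + K) ^ k) x‖) Filter.atTop (nhds 0) ∧
    ∀ i : ℕ, 1 ≤ i → i ≤ m → r ^ i * ‖x‖ ≤ ‖((lam • (1 : H →L[ℂ] H) + K) ^ i) x‖) : False := by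
  set T := lam • (1 : H →L[ℂ] H) + K with hT
  let E : Submodule ℂ H :=
    { carrier := {x : H | Tendsto (fun k => (T ^ k) x) atTop (𝓝 0)}
      add_mem' := fun {a b} ha hb => by
        simpa using Tendsto.add (show Tendsto (fun k => (T ^ k) a) atTop (𝓝 0) from ha)
          (show Tendsto (fun k => (T ^ k) b) atTop (𝓝 0) from hb)
      zero_mem' := by simp
      smul_mem' := fun c a ha => by
        have h1 := Tendsto.const_smul (show Tendsto (fun k => (T ^ k) a) atTop (𝓝 0) from ha) c
        rw [smul_zero] at h1
        change Tendsto (fun k => (T ^ k) (c • a)) atTop (𝓝 0)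
        simpa only [map_smul] using h1 }
  have hE : ∀ x, x ∈ E ↔ Tendsto (fun k => (T ^ k) x) atTop (𝓝 0) := fun x => Iff.rfl
  have hTE : ∀ x ∈ E, T x ∈ E := by
    intro x hx
    rw [hE] at *
    have := (tendsto_add_atTop_iff_nat 1).2 hx
    simpa [pow_succ] using this
  let M := E.topologicalClosure
  have hMc : IsClosed (M : Set H) := E.isClosed_topologicalClosure
  have : CompleteSpace M := hMc.completeSpace_coe
  have hTM : ∀ x ∈ M, T x ∈ M := fun x hx =>
    map_mem_closure T.continuous hx hTE
  have hKM : ∀ x ∈ M, K x ∈ M := fun x hx => by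
    have : K x = T x - lam • x := by simp [hT]
    rw [this]
    exact M.sub_mem (hTM x hx) (M.smul_mem _ hx)
  let T' : M →L[ℂ] M := (T ∘L M.subtypeL).codRestrict M fun x => hTM x x.2
  let K' : M →L[ℂ] M := (K ∘L M.subtypeL).codRestrict M fun x => hKM x x.2
  have hpow : ∀ (k : ℕ) (x : M), (((T' ^ k) x : M) : H) = (T ^ k) x := by
    intro k
    induction k with
    | zero => simp
    | succ k ih =>
      intro x
      rw [pow_succ, pow_succ, mul_apply_eq_comp, mul_apply_eq_comp, ih]
      rfl
  have hD : Dense {x : M | Tendsto (fun k => (T' ^ k) x) atTop (𝓝 0)} := by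
    intro x
    rw [closure_subtype]
    refine closure_mono ?_ x.2
    intro y hy
    refine ⟨⟨y, subset_closure hy⟩, ?_, rfl⟩
    change Tendsto _ _ _
    rw [tendsto_subtype_rng]
    simp only [hpow]
    exact (hE y).1 hy
  obtain ⟨lam', K'', hK'', hl', hT'⟩ : ∃ (lam' : ℂ) (K'' : M →L[ℂ] M), IsCompactOperator (⇑K'') ∧
      ‖lam'‖ ≤ 1 ∧ T' = lam' • (1 : M →L[ℂ] M) + K'' := by
    rcases le_or_gt ‖lam‖ 1 with h | h
    · refine ⟨lam, K', ?_, h, ?_⟩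
      · exact (hK.comp_clm M.subtypeL).codRestrict _ hMc
      · ext x
        simp [T', K', hT]
        rfl
    · obtain ⟨F, hF, hEF⟩ := aux_fin K hK lam h
      have hMF : M ≤ F := E.topologicalClosure_minimal (fun x hx => hEF x hx) F.closed_of_finiteDimensional
      have : FiniteDimensional ℂ M := Submodule.finiteDimensional_of_le hMF
      have : ProperSpace M := FiniteDimensional.proper ℂ M
      refine ⟨0, T', ?_, by simp, by ext x; simp⟩
      exact isCompactOperator_of_locallyCompactSpace_dom T'
  obtain ⟨N, hN1, hN⟩ := aux_core T' K'' hK'' lam' hl' hT' hD r hr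
  obtain ⟨x, hx0, hx, hxr⟩ := hm N
  have hxE : x ∈ E := (hE x).2 (tendsto_zero_iff_norm_tendsto_zero.2 hx)
  have h1 := hN ⟨x, subset_closure hxE⟩ (by simpa [Subtype.ext_iff] using hx0)
  have h2 : ‖(T ^ N) x‖ < r ^ N * ‖x‖ := by
    rw [← hpow N ⟨x, subset_closure hxE⟩]
    exact h1
  exact absurd (hxr N hN1 le_rfl) (not_le.2 h2)

/-- For a compact operator K on a complex Hilbert space and any
λ ∈ ℂ, the operator λI + K is not norm-unimodal. -/
theorem stmt_14 {H : Type*} [NormedAddCommGroup H] [InnerProductSpace ℂ H]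
    [CompleteSpace H]
    (K : H →L[ℂ] H) (hK : IsCompactOperator (⇑K)) (lam : ℂ) :
    ¬ NormUnimodal (lam • (1 : H →L[ℂ] H) + K) := by
  rintro ⟨r, hr, hm⟩
  exact aux_main K hK lam r hr hm
end

section
/- For every ε > 0 there exists a compact linear operator K_ε on the separable infinite-dimensional complex Hilbert space ℓ²(ℕ, ℂ) with ‖K_ε‖ < ε such that I + K_ε is distributionally chaotic. -/
open Filter Topology MeasureTheory
open scoped Classical ENNReal

namespace DC

/-- auxiliary fast growing sequence -/
def D (D0 : ℕ) : ℕ → ℕ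
  | 0 => D0
  | j + 1 => (j + 1) * (2 ^ j * (4 * (j + 1) * (2 * 4 ^ j * D D0 j)) ^ 2)

def N (D0 j : ℕ) : ℕ := 2 * 4 ^ j * D D0 j
def q (D0 j : ℕ) : ℕ := 4 * (j + 1) * N D0 j
def M (D0 j : ℕ) : ℕ := 2 ^ j * q D0 j ^ 2

lemma D_succ (D0 j : ℕ) : D D0 (j + 1) = (j + 1) * M D0 j := rfl

lemma D_le_N (D0 j : ℕ) : D D0 j ≤ N D0 j := by
  unfold N
  have : 0 < 4 ^ j := by positivity
  nlinarith [Nat.zero_le (D D0 j)]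

lemma four_N_le_q (D0 j : ℕ) : 4 * N D0 j ≤ q D0 j := by
  unfold q
  nlinarith [Nat.zero_le (j * N D0 j)]

lemma q_le_M (D0 j : ℕ) : q D0 j ≤ M D0 j := by
  unfold M
  have h : 0 < 2 ^ j := by positivity
  calc q D0 j ≤ q D0 j ^ 2 := Nat.le_self_pow (by norm_num) _
    _ = 1 * q D0 j ^ 2 := by ring
    _ ≤ _ := Nat.mul_le_mul_right _ h

lemma two_D_le (D0 j : ℕ) : 2 * D D0 j ≤ D D0 (j + 1) := by
  rw [D_succ]
  have h1 := D_le_N D0 j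
  have h2 := four_N_le_q D0 j
  have h3 := q_le_M D0 j
  have h4 : M D0 j ≤ (j + 1) * M D0 j := Nat.le_mul_of_pos_left _ (by omega)
  omega

lemma D_mono (D0 : ℕ) : Monotone (D D0) :=
  monotone_nat_of_le_succ fun j => by have := two_D_le D0 j; omega

lemma D_ge (D0 j : ℕ) : 2 ^ j * D0 ≤ D D0 j := by
  induction j with
  | zero => simp [D]
  | succ j ih => have := two_D_le D0 j; rw [pow_succ]; nlinarith

lemma q_mono (D0 : ℕ) : Monotone (q D0) := by
  intro i j h
  unfold q N
  have := D_mono D0 h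
  gcongr
  norm_num

section freq

lemma limsup_one {u : ℕ → ℝ} (h0 : ∀ n, 0 ≤ u n) (h1 : ∀ n, u n ≤ 1) (n : ℕ → ℕ)
    (hn : Tendsto n atTop atTop) (hu : Tendsto (fun j => u (n j)) atTop (𝓝 1)) :
    limsup u atTop = 1 := by
  have hb : IsBoundedUnder (· ≤ ·) atTop u := isBoundedUnder_of ⟨1, h1⟩
  have hc : IsCoboundedUnder (· ≤ ·) atTop u :=
    (isBoundedUnder_of (r := (· ≥ ·)) ⟨0, h0⟩).isCoboundedUnder_le
  apply le_antisymm
  · exact limsup_le_of_le hc (Eventually.of_forall h1)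
  · refine le_of_forall_lt fun c hcc => ?_
    obtain ⟨d, hd1, hd2⟩ := exists_between hcc
    refine hd1.trans_le (le_limsup_of_frequently_le ?_ hb)
    exact hn.frequently ((hu.eventually (lt_mem_nhds hd2)).mono fun _ h => h.le).frequently

lemma liminf_zero {u : ℕ → ℝ} (h0 : ∀ n, 0 ≤ u n) (h1 : ∀ n, u n ≤ 1) (n : ℕ → ℕ)
    (hn : Tendsto n atTop atTop) (hu : Tendsto (fun j => u (n j)) atTop (𝓝 0)) :
    liminf u atTop = 0 := by
  have hb : IsBoundedUnder (· ≥ ·) atTop u := isBoundedUnder_of ⟨0, h0⟩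
  have hc : IsCoboundedUnder (· ≥ ·) atTop u :=
    (isBoundedUnder_of (r := (· ≤ ·)) ⟨1, h1⟩).isCoboundedUnder_ge
  apply le_antisymm
  · refine le_of_forall_gt fun c hcc => ?_
    obtain ⟨d, hd1, hd2⟩ := exists_between hcc
    refine lt_of_le_of_lt (liminf_le_of_frequently_le ?_ hb) hd2
    exact hn.frequently ((hu.eventually (gt_mem_nhds hd1)).mono fun _ h => h.le).frequently
  · exact le_liminf_of_le hc (Eventually.of_forall h0)

variable {X : Type*} [MetricSpace X] (f : X → X) (x y : X)

lemma freq_nonneg (τ : ℝ) (n : ℕ) : 0 ≤ distFreq f x y τ n := by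
  unfold distFreq; positivity

lemma freq_le_one (τ : ℝ) (n : ℕ) : distFreq f x y τ n ≤ 1 := by
  unfold distFreq
  apply div_le_one_of_le₀ _ (by positivity)
  exact_mod_cast (Finset.card_filter_le _ _).trans (by simp)

lemma freq_ge (τ : ℝ) (j m : ℕ) (hm : 0 < m)
    (h : ∀ i, m ≤ i → i ≤ (j + 1) * m → dist (f^[i] x) (f^[i] y) < τ) :
    1 - 1 / ((j : ℝ) + 1) ≤ distFreq f x y τ ((j + 1) * m) := by
  unfold distFreq
  have hc : j * m ≤ ((Finset.range ((j + 1) * m)).filter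
      fun i => dist (f^[i] x) (f^[i] y) < τ).card := by
    calc j * m = (Finset.Ico m ((j + 1) * m)).card := by
          rw [Nat.card_Ico, Nat.add_mul, one_mul, Nat.add_sub_cancel]
      _ ≤ _ := by
          apply Finset.card_le_card
          intro i hi
          simp only [Finset.mem_Ico] at hi
          simp only [Finset.mem_filter, Finset.mem_range]
          exact ⟨hi.2, h i hi.1 hi.2.le⟩
  have hc' : (j : ℝ) * m ≤ ((((Finset.range ((j + 1) * m)).filter
      fun i => dist (f^[i] x) (f^[i] y) < τ).card : ℕ) : ℝ) := by exact_mod_cast hc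
  have hm' : (0 : ℝ) < m := by exact_mod_cast hm
  rw [le_div_iff₀ (by positivity)]
  refine le_trans (le_of_eq ?_) hc'
  push_cast
  field_simp
  ring

lemma freq_le (τ : ℝ) (j m : ℕ) (hm : 0 < m)
    (h : ∀ i, m ≤ i → i ≤ (j + 1) * m → τ ≤ dist (f^[i] x) (f^[i] y)) :
    distFreq f x y τ ((j + 1) * m) ≤ 1 / ((j : ℝ) + 1) := by
  unfold distFreq
  have hc : ((Finset.range ((j + 1) * m)).filter
      fun i => dist (f^[i] x) (f^[i] y) < τ).card ≤ m := by
    calc _ ≤ (Finset.range m).card := by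
          apply Finset.card_le_card
          intro i hi
          simp only [Finset.mem_filter, Finset.mem_range] at hi ⊢
          by_contra hcon
          exact absurd hi.2 (not_lt.2 (h i (not_lt.1 hcon) hi.1.le))
      _ = m := by simp
  have hc' : ((((Finset.range ((j + 1) * m)).filter
      fun i => dist (f^[i] x) (f^[i] y) < τ).card : ℕ) : ℝ) ≤ m := by exact_mod_cast hc
  have hm' : (0 : ℝ) < m := by exact_mod_cast hm
  rw [div_le_iff₀ (by positivity)]
  refine le_trans hc' (le_of_eq ?_)
  push_cast
  field_simp

/-- abstract criterion -/
lemma pair_of (c : ℝ) (hc : 0 < c) (b : ℕ → ℝ) (hb : ∀ i, dist (f^[i] x) (f^[i] y) = c * b i)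
    (m n : ℕ → ℕ) (hm : ∀ j, 0 < m j) (hn : ∀ j, 0 < n j)
    (hq : ∀ j i, m j ≤ i → i ≤ (j + 1) * m j → b i ≤ 4 * (1 / 2) ^ j)
    (hl : ∀ j i, n j ≤ i → i ≤ (j + 1) * n j → 1 ≤ b i) :
    DistributionallyChaoticPair f x y := by
  have ht : ∀ m : ℕ → ℕ, (∀ j, 0 < m j) → Tendsto (fun j => (j + 1) * m j) atTop atTop := by
    intro m hm
    refine tendsto_atTop_mono (fun j => ?_) tendsto_id
    have := Nat.le_mul_of_pos_right (j + 1) (hm j)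
    simp only [id]; omega
  have h1 := tendsto_one_div_add_atTop_nhds_zero_nat (𝕜 := ℝ)
  refine ⟨fun τ hτ => ?_, c, hc, ?_⟩
  · refine limsup_one (freq_nonneg f x y τ) (freq_le_one f x y τ) _ (ht m hm) ?_
    have hs : Tendsto (fun j : ℕ => c * (4 * (1 / 2 : ℝ) ^ j)) atTop (𝓝 0) := by
      have := ((tendsto_pow_atTop_nhds_zero_of_lt_one (r := (1 / 2 : ℝ)) (by norm_num)
        (by norm_num)).const_mul 4).const_mul c
      simpa using this
    have h2 : Tendsto (fun j : ℕ => 1 - 1 / ((j : ℝ) + 1)) atTop (𝓝 1) := by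
      simpa using h1.const_sub 1
    refine tendsto_of_tendsto_of_tendsto_of_le_of_le' h2 tendsto_const_nhds ?_
      (Eventually.of_forall fun j => freq_le_one f x y τ _)
    filter_upwards [hs.eventually (gt_mem_nhds hτ)] with j hj
    apply freq_ge f x y τ j (m j) (hm j)
    intro i hi1 hi2
    rw [hb]
    exact lt_of_le_of_lt (mul_le_mul_of_nonneg_left (hq j i hi1 hi2) hc.le) hj
  · refine liminf_zero (freq_nonneg f x y c) (freq_le_one f x y c) _ (ht n hn) ?_
    refine squeeze_zero (fun j => freq_nonneg f x y c _) (fun j => ?_) h1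
    apply freq_le f x y c j (n j) (hn j)
    intro i hi1 hi2
    rw [hb]
    nlinarith [hl j i hi1 hi2]

end freq

section op

noncomputable abbrev H := lp (fun _ : ℕ => ℂ) 2

noncomputable def e (n : ℕ) : H := lp.single 2 n (1 : ℂ)

lemma norm_e (n : ℕ) : ‖e n‖ = 1 := by
  unfold e; rw [lp.norm_single (by norm_num)]; simp

noncomputable def φ (n : ℕ) : H →L[ℂ] ℂ := innerSL ℂ (e n)

lemma norm_φ (n : ℕ) : ‖φ n‖ = 1 := by
  unfold φ; rw [innerSL_apply_norm, norm_e]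

lemma φ_e (n m : ℕ) : φ n (e m) = if n = m then 1 else 0 := by
  unfold φ e
  rw [innerSL_apply_apply, lp.inner_single_left]
  by_cases h : n = m
  · subst h; simp
  · simp [h, Pi.single_apply]

noncomputable def R (n m : ℕ) : H →L[ℂ] H := (φ n).smulRight (e m)

lemma norm_R (n m : ℕ) : ‖R n m‖ = 1 := by
  unfold R; rw [ContinuousLinearMap.norm_smulRight_apply, norm_φ, norm_e, one_mul]

lemma R_e (n m k : ℕ) : R n m (e k) = if n = k then e m else 0 := by
  unfold R; rw [ContinuousLinearMap.smulRight_apply, φ_e]; split_ifs <;> simp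

lemma R_compact (n m : ℕ) : IsCompactOperator (R n m) := by
  have h : IsCompactOperator (φ n) := by
    refine ⟨Metric.closedBall 0 1, isCompact_closedBall 0 1, ?_⟩
    apply (φ n).continuous.continuousAt.preimage_mem_nhds
    rw [map_zero]
    exact Metric.closedBall_mem_nhds 0 one_pos
  exact h.clm_comp (ContinuousLinearMap.toSpanSingleton ℂ (e m))

noncomputable def a (D0 j : ℕ) : ℝ := (1 - 1 / (q D0 j : ℝ)) ^ 2
noncomputable def δ (D0 j : ℕ) : ℝ := 1 / (D D0 j : ℝ)

noncomputable def Kj (D0 j : ℕ) : H →L[ℂ] H :=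
  ((a D0 j : ℂ) - 1) • (R (2 * j) (2 * j) + R (2 * j + 1) (2 * j + 1)) +
    ((a D0 j : ℂ) * (δ D0 j : ℂ)) • R (2 * j + 1) (2 * j)

lemma Kj_compact (D0 j : ℕ) : IsCompactOperator (Kj D0 j) := by
  unfold Kj
  exact (((R_compact _ _).add (R_compact _ _)).smul _).add ((R_compact _ _).smul _)

variable {D0 : ℕ} (hD : 0 < D0)
include hD

lemma D_pos (j : ℕ) : 0 < D D0 j := lt_of_lt_of_le (by positivity) (D_ge D0 j)
lemma N_pos (j : ℕ) : 0 < N D0 j := lt_of_lt_of_le (D_pos hD j) (D_le_N D0 j)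
lemma q_pos (j : ℕ) : 0 < q D0 j := by have := N_pos hD j; have := four_N_le_q D0 j; omega
lemma M_pos (j : ℕ) : 0 < M D0 j := lt_of_lt_of_le (q_pos hD j) (q_le_M D0 j)

lemma inv_q_le_one (j : ℕ) : 1 / (q D0 j : ℝ) ≤ 1 := by
  have : (1 : ℝ) ≤ q D0 j := by exact_mod_cast q_pos hD j
  rw [div_le_one (by linarith)]; exact this

lemma a_nonneg (j : ℕ) : 0 ≤ a D0 j := by unfold a; positivity

lemma a_le_one (j : ℕ) : a D0 j ≤ 1 := by
  unfold a
  have := inv_q_le_one hD j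
  have h0 : 0 ≤ 1 / (q D0 j : ℝ) := by positivity
  exact pow_le_one₀ (by linarith) (by linarith)

lemma one_sub_a (j : ℕ) : 1 - a D0 j ≤ δ D0 j / 2 := by
  unfold a δ
  have hDp : (0 : ℝ) < D D0 j := by exact_mod_cast D_pos hD j
  have hq : (4 : ℝ) * D D0 j ≤ q D0 j := by
    have := D_le_N D0 j; have := four_N_le_q D0 j
    exact_mod_cast (by omega : 4 * D D0 j ≤ q D0 j)
  have h2 : 1 / (q D0 j : ℝ) ≤ 1 / (4 * D D0 j) := one_div_le_one_div_of_le (by positivity) hq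
  have h3 : 1 / (4 * (D D0 j : ℝ)) = (1 / (D D0 j : ℝ)) / 4 := by field_simp
  rw [h3] at h2
  nlinarith [sq_nonneg (1 / (q D0 j : ℝ))]

lemma δ_le (j : ℕ) : δ D0 j ≤ (1 / D0) * (1 / 2) ^ j := by
  unfold δ
  have h : (2 : ℝ) ^ j * D0 ≤ D D0 j := by exact_mod_cast D_ge D0 j
  have hDp : (0 : ℝ) < D0 := by exact_mod_cast hD
  calc 1 / (D D0 j : ℝ) ≤ 1 / ((2 : ℝ) ^ j * D0) := one_div_le_one_div_of_le (by positivity) h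
    _ = _ := by rw [one_div_pow]; field_simp

lemma δ_nonneg (j : ℕ) : 0 ≤ δ D0 j := by unfold δ; positivity

lemma δ_le_one (j : ℕ) : δ D0 j ≤ 1 := by
  unfold δ
  have : (1 : ℝ) ≤ D D0 j := by exact_mod_cast D_pos hD j
  rw [div_le_one (by linarith)]; exact this

lemma norm_Kj (j : ℕ) : ‖Kj D0 j‖ ≤ (2 / D0) * (1 / 2) ^ j := by
  have h1 : ‖((a D0 j : ℂ) - 1)‖ ≤ δ D0 j / 2 := by
    rw [← Complex.ofReal_one, ← Complex.ofReal_sub, Complex.norm_real, Real.norm_eq_abs,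
      abs_sub_comm, abs_of_nonneg (by linarith [a_le_one hD j])]
    exact one_sub_a hD j
  have h2 : ‖(a D0 j : ℂ) * (δ D0 j : ℂ)‖ ≤ δ D0 j := by
    rw [norm_mul, Complex.norm_real, Complex.norm_real, Real.norm_of_nonneg (a_nonneg hD j),
      Real.norm_of_nonneg (δ_nonneg hD j)]
    exact mul_le_of_le_one_left (δ_nonneg hD j) (a_le_one hD j)
  have h3 : ‖R (2 * j) (2 * j) + R (2 * j + 1) (2 * j + 1)‖ ≤ 2 := by
    refine (norm_add_le _ _).trans ?_
    rw [norm_R, norm_R]; norm_num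
  have h4 := δ_le hD j
  unfold Kj
  calc _ ≤ _ := norm_add_le _ _
    _ ≤ δ D0 j / 2 * 2 + δ D0 j * 1 := by
      rw [norm_smul, norm_smul, norm_R]
      have := δ_nonneg hD j
      gcongr
    _ ≤ _ := by
      have : (2 / (D0 : ℝ)) * (1 / 2) ^ j = 2 * ((1 / D0) * (1 / 2) ^ j) := by ring
      rw [this]; linarith

lemma summable_bd : HasSum (fun j : ℕ => (2 / (D0 : ℝ)) * (1 / 2) ^ j) (2 / D0 * 2) :=
  hasSum_geometric_two.mul_left _

lemma summable_Kj : Summable (Kj D0) :=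
  Summable.of_norm_bounded (summable_bd hD).summable (norm_Kj hD)

omit hD in
lemma Kj_u (i j : ℕ) : Kj D0 i (e (2 * j)) =
    if i = j then ((a D0 j : ℂ) - 1) • e (2 * j) else 0 := by
  unfold Kj
  simp only [ContinuousLinearMap.add_apply, ContinuousLinearMap.smul_apply, R_e]
  by_cases h : i = j
  · subst h; simp
  · have h1 : ¬ (2 * i = 2 * j) := by omega
    have h2 : ¬ (2 * i + 1 = 2 * j) := by omega
    simp [h, h2]

omit hD in
lemma Kj_v (i j : ℕ) : Kj D0 i (e (2 * j + 1)) =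
    if i = j then ((a D0 j : ℂ) - 1) • e (2 * j + 1) +
      ((a D0 j : ℂ) * (δ D0 j : ℂ)) • e (2 * j) else 0 := by
  unfold Kj
  simp only [ContinuousLinearMap.add_apply, ContinuousLinearMap.smul_apply, R_e]
  by_cases h : i = j
  · subst h; simp
  · have h2 : ¬ (2 * i = 2 * j + 1) := by omega
    simp [h, h2]

omit hD in
variable (D0) in
noncomputable def K : H →L[ℂ] H := ∑' j, Kj D0 j

lemma norm_K : ‖K D0‖ ≤ 2 / D0 * 2 :=
  tsum_of_norm_bounded (summable_bd hD) (norm_Kj hD)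

lemma K_compact : IsCompactOperator (K D0) := by
  have hcl := isClosed_setOf_isCompactOperator (σ₁₂ := RingHom.id ℂ) (M₁ := H) (M₂ := H)
  refine hcl.mem_of_tendsto (summable_Kj hD).hasSum (Eventually.of_forall fun s => ?_)
  exact (compactOperator (RingHom.id ℂ) H H).sum_mem fun i _ => Kj_compact D0 i

lemma K_apply (x : H) : K D0 x = ∑' j, Kj D0 j x :=
  ((summable_Kj hD).hasSum.mapL (ContinuousLinearMap.apply ℂ H x)).tsum_eq.symm

lemma K_u (j : ℕ) : K D0 (e (2 * j)) = ((a D0 j : ℂ) - 1) • e (2 * j) := by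
  rw [K_apply hD, tsum_eq_single j]
  · rw [Kj_u, if_pos rfl]
  · intro i hi; rw [Kj_u, if_neg hi]

lemma K_v (j : ℕ) : K D0 (e (2 * j + 1)) = ((a D0 j : ℂ) - 1) • e (2 * j + 1) +
      ((a D0 j : ℂ) * (δ D0 j : ℂ)) • e (2 * j) := by
  rw [K_apply hD, tsum_eq_single j]
  · rw [Kj_v, if_pos rfl]
  · intro i hi; rw [Kj_v, if_neg hi]

lemma T_pow_v (j k : ℕ) : ((1 + K D0) ^ k) (e (2 * j + 1)) =
    (a D0 j : ℂ) ^ k • (e (2 * j + 1) + ((k : ℂ) * (δ D0 j : ℂ)) • e (2 * j)) := by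
  induction k with
  | zero => simp
  | succ k ih =>
    rw [pow_succ', ContinuousLinearMap.mul_apply, ih]
    simp only [map_smul, map_add, ContinuousLinearMap.add_apply, ContinuousLinearMap.one_apply,
      K_u hD, K_v hD]
    push_cast
    module

omit hD in
noncomputable def x0 : H := ∑' j : ℕ, ((1 / 4 : ℂ) ^ j) • e (2 * j + 1)

omit hD in
lemma hasSum_x0 : HasSum (fun j : ℕ => ((1 / 4 : ℂ) ^ j) • e (2 * j + 1)) x0 := by
  apply Summable.hasSum
  refine Summable.of_norm_bounded (g := fun j : ℕ => (1 / 4 : ℝ) ^ j)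
    (summable_geometric_of_lt_one (by norm_num) (by norm_num)) fun j => ?_
  rw [norm_smul, norm_e]; simp

lemma hasSum_T (k : ℕ) : HasSum (fun j : ℕ => ((1 / 4 : ℂ) ^ j) •
    ((a D0 j : ℂ) ^ k • (e (2 * j + 1) + ((k : ℂ) * (δ D0 j : ℂ)) • e (2 * j))))
    (((1 + K D0) ^ k) x0) := by
  have := hasSum_x0.mapL ((1 + K D0) ^ k)
  simpa only [map_smul, T_pow_v hD] using this

lemma norm_term (j k : ℕ) : ‖((1 / 4 : ℂ) ^ j) •
    ((a D0 j : ℂ) ^ k • (e (2 * j + 1) + ((k : ℂ) * (δ D0 j : ℂ)) • e (2 * j)))‖ ≤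
    (1 / 4) ^ j * (a D0 j ^ k * (1 + k * δ D0 j)) := by
  rw [norm_smul, norm_smul]
  have h1 : ‖(1 / 4 : ℂ) ^ j‖ = (1 / 4) ^ j := by simp
  have h2 : ‖(a D0 j : ℂ) ^ k‖ = a D0 j ^ k := by
    rw [norm_pow, Complex.norm_real, Real.norm_of_nonneg (a_nonneg hD j)]
  have h3 : ‖e (2 * j + 1) + ((k : ℂ) * (δ D0 j : ℂ)) • e (2 * j)‖ ≤ 1 + k * δ D0 j := by
    refine (norm_add_le _ _).trans (le_of_eq ?_)
    rw [norm_smul, norm_e, norm_e, norm_mul, Complex.norm_real,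
      Real.norm_of_nonneg (δ_nonneg hD j)]
    simp
  rw [h1, h2]
  have := a_nonneg hD j
  gcongr

lemma apow_upper (j k : ℕ) (hk : 0 < k) : a D0 j ^ k * k ≤ (q D0 j : ℝ) ^ 2 / k := by
  have hq : (0 : ℝ) < q D0 j := by exact_mod_cast q_pos hD j
  have hk' : (0 : ℝ) < k := by exact_mod_cast hk
  have h1 := inv_q_le_one hD j
  set t : ℝ := 1 / (q D0 j : ℝ) with ht
  have ht0 : 0 < t := by positivity
  have hr : (1 - t) ^ k * (1 + k * t) ≤ 1 := by
    calc (1 - t) ^ k * (1 + k * t) ≤ (1 - t) ^ k * (1 + t) ^ k := by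
          have := one_add_mul_le_pow (a := t) (by linarith) k
          have h0 : 0 ≤ (1 - t) ^ k := pow_nonneg (by linarith) _
          gcongr
      _ = (1 - t ^ 2) ^ k := by rw [← mul_pow]; ring
      _ ≤ 1 := pow_le_one₀ (by nlinarith) (by nlinarith)
  have h0 : 0 ≤ (1 - t) ^ k := pow_nonneg (by linarith) _
  have hr2 : (1 - t) ^ k ≤ q D0 j / k := by
    rw [le_div_iff₀ hk']
    have : (1 - t) ^ k * (k * t) ≤ 1 := by nlinarith
    calc (1 - t) ^ k * k = ((1 - t) ^ k * (k * t)) * q D0 j := by rw [ht]; field_simp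
      _ ≤ 1 * q D0 j := by gcongr
      _ = _ := one_mul _
  have ha : a D0 j ^ k = ((1 - t) ^ k) ^ 2 := by unfold a; rw [← pow_mul, ← pow_mul, mul_comm]
  rw [ha]
  calc ((1 - t) ^ k) ^ 2 * k ≤ (q D0 j / k) ^ 2 * k := by gcongr
    _ = _ := by field_simp

lemma apow_lower (j k : ℕ) (hk : 4 * k ≤ q D0 j) : 1 / 2 ≤ a D0 j ^ k := by
  have hq : (0 : ℝ) < q D0 j := by exact_mod_cast q_pos hD j
  have hk' : (4 : ℝ) * k ≤ q D0 j := by exact_mod_cast hk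
  have h1 := inv_q_le_one hD j
  unfold a
  rw [← pow_mul]
  have := one_add_mul_le_pow (a := -(1 / (q D0 j : ℝ))) (by linarith) (2 * k)
  rw [← sub_eq_add_neg] at this
  refine le_trans ?_ this
  have h2 : (4 * (k : ℝ)) / q D0 j ≤ 1 := by rw [div_le_one hq]; exact hk'
  have h3 : ((2 * k : ℕ) : ℝ) * -(1 / (q D0 j : ℝ)) = -((4 * (k : ℝ)) / q D0 j) / 2 := by
    push_cast; ring
  rw [h3]; linarith

lemma term_quiet (i j k : ℕ) (h1 : M D0 j ≤ k) (h2 : k ≤ (j + 1) * M D0 j) :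
    (1 / 4 : ℝ) ^ i * (a D0 i ^ k * (1 + k * δ D0 i)) ≤ 2 * (1 / 2) ^ j * (1 / 2) ^ i := by
  have hkp : 0 < k := lt_of_lt_of_le (M_pos hD j) h1
  have hk' : (1 : ℝ) ≤ k := by exact_mod_cast hkp
  have ha0 := pow_nonneg (a_nonneg hD i) k
  have ha1 := pow_le_one₀ (n := k) (a_nonneg hD i) (a_le_one hD i)
  have h4 : (1 / 4 : ℝ) ^ i = (1 / 2) ^ i * (1 / 2) ^ i := by rw [← mul_pow]; norm_num
  have hi0 : (0 : ℝ) < (1 / 2) ^ i := by positivity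
  have hi1 : (1 / 2 : ℝ) ^ i ≤ 1 := pow_le_one₀ (by norm_num) (by norm_num)
  have hδ0 := δ_nonneg hD i
  have hδ1 := δ_le_one hD i
  rcases le_or_gt i j with hij | hij
  · have hg : a D0 i ^ k * (1 + k * δ D0 i) ≤ 2 * (1 / 2) ^ j := by
      calc a D0 i ^ k * (1 + k * δ D0 i) ≤ a D0 i ^ k * (2 * k) := by
            gcongr; nlinarith
        _ = 2 * (a D0 i ^ k * k) := by ring
        _ ≤ 2 * ((q D0 i : ℝ) ^ 2 / k) := by gcongr; exact apow_upper hD i k hkp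
        _ ≤ 2 * (1 / 2) ^ j := by
            gcongr
            rw [div_le_iff₀ (by linarith)]
            have hM : (2 : ℝ) ^ j * (q D0 j : ℝ) ^ 2 ≤ k := by
              have : ((M D0 j : ℕ) : ℝ) ≤ k := by exact_mod_cast h1
              unfold M at this; push_cast at this; exact this
            have hqq : (q D0 i : ℝ) ≤ q D0 j := by exact_mod_cast q_mono D0 hij
            calc (q D0 i : ℝ) ^ 2 ≤ (q D0 j : ℝ) ^ 2 := by gcongr
              _ = (1 / 2) ^ j * (2 ^ j * (q D0 j : ℝ) ^ 2) := by
                rw [← mul_assoc, ← mul_pow]; norm_num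
              _ ≤ _ := by gcongr
    calc _ ≤ (1 / 4 : ℝ) ^ i * (2 * (1 / 2) ^ j) := by gcongr
      _ = 2 * (1 / 2) ^ j * ((1 / 2) ^ i * (1 / 2) ^ i) := by rw [h4]; ring
      _ ≤ 2 * (1 / 2) ^ j * ((1 / 2) ^ i * 1) := by gcongr
      _ = _ := by ring
  · have hDk : (k : ℝ) ≤ D D0 i := by
      have := D_mono D0 (Nat.succ_le_of_lt hij)
      rw [Nat.succ_eq_add_one, D_succ] at this
      exact_mod_cast h2.trans this
    have hDp : (0 : ℝ) < D D0 i := by exact_mod_cast D_pos hD i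
    have hkδ : k * δ D0 i ≤ 1 := by
      unfold δ; rw [mul_one_div, div_le_one hDp]; exact hDk
    have hkδ0 : 0 ≤ k * δ D0 i := by positivity
    have hg : a D0 i ^ k * (1 + k * δ D0 i) ≤ 2 := by nlinarith
    have hji : (1 / 2 : ℝ) ^ i ≤ (1 / 2) ^ j :=
      pow_le_pow_of_le_one (by norm_num) (by norm_num) hij.le
    calc _ ≤ (1 / 4 : ℝ) ^ i * 2 := by gcongr
      _ = 2 * (1 / 2) ^ i * (1 / 2) ^ i := by rw [h4]; ring
      _ ≤ _ := by gcongr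

lemma quiet (j k : ℕ) (h1 : M D0 j ≤ k) (h2 : k ≤ (j + 1) * M D0 j) :
    ‖((1 + K D0) ^ k) x0‖ ≤ 4 * (1 / 2) ^ j := by
  rw [← (hasSum_T hD k).tsum_eq]
  have := hasSum_geometric_two.mul_left (2 * (1 / 2 : ℝ) ^ j)
  refine (tsum_of_norm_bounded this fun i =>
    (norm_term hD i k).trans (term_quiet hD i j k h1 h2)).trans (le_of_eq (by ring))

lemma loud (j k : ℕ) (h1 : N D0 j ≤ k) (h2 : k ≤ (j + 1) * N D0 j) :
    1 ≤ ‖((1 + K D0) ^ k) x0‖ := by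
  have hs := (hasSum_T hD k).mapL (φ (2 * j))
  have hv : φ (2 * j) (((1 + K D0) ^ k) x0) =
      (1 / 4 : ℂ) ^ j * ((a D0 j : ℂ) ^ k * ((k : ℂ) * (δ D0 j : ℂ))) := by
    rw [← hs.tsum_eq, tsum_eq_single j]
    · have hpar : ¬ (2 * j = 2 * j + 1) := by omega
      simp [φ_e]
    · intro i hi
      have hpar : ¬ (2 * j = 2 * i + 1) := by omega
      have hneq : ¬ (j = i) := fun h => hi h.symm
      simp [φ_e, hpar, hneq]
  have hn : ‖φ (2 * j) (((1 + K D0) ^ k) x0)‖ ≤ ‖((1 + K D0) ^ k) x0‖ := by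
    have := (φ (2 * j)).le_opNorm (((1 + K D0) ^ k) x0)
    rwa [norm_φ, one_mul] at this
  refine le_trans ?_ hn
  have hr : (1 / 4 : ℂ) ^ j * ((a D0 j : ℂ) ^ k * ((k : ℂ) * (δ D0 j : ℂ))) =
      (((1 / 4 : ℝ) ^ j * (a D0 j ^ k * (k * δ D0 j)) : ℝ) : ℂ) := by push_cast; ring
  rw [hv, hr, Complex.norm_real]
  refine le_trans ?_ (Real.le_norm_self _)
  have ha := apow_lower hD j k (by unfold q; nlinarith)
  have hDp : (0 : ℝ) < D D0 j := by exact_mod_cast D_pos hD j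
  have hk : (2 : ℝ) * 4 ^ j ≤ k * δ D0 j := by
    unfold δ
    rw [mul_one_div, le_div_iff₀ hDp]
    have : ((N D0 j : ℕ) : ℝ) ≤ k := by exact_mod_cast h1
    unfold N at this; push_cast at this; exact this
  calc (1 : ℝ) = (1 / 4) ^ j * (1 / 2 * (2 * 4 ^ j)) := by
        have : (1 / 4 : ℝ) ^ j * 4 ^ j = 1 := by rw [← mul_pow]; norm_num
        linear_combination -this
    _ ≤ _ := by gcongr

lemma chaotic : DistributionallyChaotic (fun x => ((1 : H →L[ℂ] H) + K D0) x) := by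
  have hit : ∀ (k : ℕ) (x : H), (fun x => ((1 : H →L[ℂ] H) + K D0) x)^[k] x =
      ((1 + K D0) ^ k) x := by
    intro k x
    induction k with
    | zero => simp
    | succ k ih => rw [Function.iterate_succ_apply', ih, pow_succ']; rfl
  have hx : x0 ≠ 0 := by
    intro h
    have := loud hD 0 (N D0 0) le_rfl (by simp)
    rw [h, map_zero, norm_zero] at this
    linarith
  refine ⟨Set.range fun r : ℝ => (r : ℂ) • x0, ?_, ?_⟩
  · intro hc
    have hinj : Function.Injective fun r : ℝ => (r : ℂ) • x0 :=
      (smul_left_injective ℂ hx).comp Complex.ofReal_injective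
    rw [← Set.image_univ] at hc
    exact Cardinal.not_countable_real
      (Set.countable_of_injective_of_countable_image hinj.injOn hc)
  · rintro _ ⟨r, rfl⟩ _ ⟨s, rfl⟩ hne
    have hrs : r ≠ s := fun h => hne (by rw [h])
    refine pair_of _ _ _ |r - s| (abs_pos.2 (sub_ne_zero.2 hrs))
      (fun k => ‖((1 + K D0) ^ k) x0‖) (fun i => ?_) (M D0) (N D0) (M_pos hD) (N_pos hD)
      (quiet hD) (loud hD)
    rw [hit, hit, dist_eq_norm, map_smul, map_smul, ← sub_smul, norm_smul,
      ← Complex.ofReal_sub, Complex.norm_real, Real.norm_eq_abs]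

end op

end DC

/-- For every ε > 0 there is a compact operator K on ℓ²(ℕ,ℂ) with
‖K‖ < ε such that I + K is distributionally chaotic. -/
theorem stmt_16 (ε : ℝ) (hε : 0 < ε) :
    ∃ K : lp (fun _ : ℕ => ℂ) 2 →L[ℂ] lp (fun _ : ℕ => ℂ) 2,
      IsCompactOperator (⇑K) ∧ ‖K‖ < ε ∧
      DistributionallyChaotic (fun x => ((1 : lp (fun _ : ℕ => ℂ) 2 →L[ℂ]
        lp (fun _ : ℕ => ℂ) 2) + K) x) := by
  obtain ⟨D0, hD⟩ := exists_nat_gt (4 / ε)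
  have h0 : (0 : ℝ) < D0 := lt_trans (by positivity) hD
  have hD0 : 0 < D0 := by exact_mod_cast h0
  refine ⟨DC.K D0, DC.K_compact hD0, lt_of_le_of_lt (DC.norm_K hD0) ?_, DC.chaotic hD0⟩
  rw [div_lt_iff₀ hε] at hD
  rw [div_mul_eq_mul_div, div_lt_iff₀ h0]
  linarith
end

section
/- Let m ≥ 1 be an integer and ε > 0. On ℂ^{2m} with the Euclidean norm, let A = (1−ε)I + 2εS, where S is the nilpotent shift S e_j = e_{j−1} for 2 ≤ j ≤ 2m and S e_1 = 0 (so A has 1−ε on the diagonal and 2ε on the superdiagonal). Let x = (1, 1, …, 1) ∈ ℂ^{2m}. Then for every integer n with 1 ≤ n ≤ m, ‖A^n x‖ ≥ (1+ε)^n ‖x‖ / √2. -/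
open Filter Topology MeasureTheory
open scoped Classical ENNReal

theorem aux_pow_mulVec (m : ℕ) (ε : ℝ)
    (S A : Matrix (Fin (2 * m)) (Fin (2 * m)) ℂ)
    (hS : ∀ i j, S i j = if (j : ℕ) = (i : ℕ) + 1 then 1 else 0)
    (hA : A = ((1 - ε : ℝ) : ℂ) • (1 : Matrix (Fin (2 * m)) (Fin (2 * m)) ℂ)
      + ((2 * ε : ℝ) : ℂ) • S)
    (v : Fin (2 * m) → ℂ) (hv : ∀ j, v j = 1) (n : ℕ) :
    ∀ i : Fin (2 * m), (i : ℕ) + n < 2 * m →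
      Matrix.mulVec (A ^ n) v i = (((1 + ε) ^ n : ℝ) : ℂ) := by
  induction n with
  | zero => intro i _; simp [hv]
  | succ n ih =>
    intro i hi
    have hSv : ∀ w : Fin (2 * m) → ℂ,
        Matrix.mulVec S w i = w ⟨(i : ℕ) + 1, by omega⟩ := by
      intro w
      rw [Matrix.mulVec, dotProduct,
        Finset.sum_eq_single (⟨(i : ℕ) + 1, by omega⟩ : Fin (2 * m))]
      · simp [hS]
      · intro b _ hb
        have : (b : ℕ) ≠ (i : ℕ) + 1 := fun h => hb (Fin.ext h)
        simp [hS, this]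
      · simp
    have h1 := ih i (by omega)
    have h2 := ih ⟨(i : ℕ) + 1, by omega⟩ (by simp only; omega)
    rw [pow_succ', ← Matrix.mulVec_mulVec]
    generalize Matrix.mulVec (A ^ n) v = w at h1 h2
    rw [hA, Matrix.add_mulVec, Matrix.smul_mulVec, Matrix.smul_mulVec, Matrix.one_mulVec]
    simp only [Pi.add_apply, Pi.smul_apply, hSv, h1, h2, smul_eq_mul]
    push_cast
    ring

/-- For A = (1-ε)I + 2εS on ℂ^{2m} (S the nilpotent superdiagonal
shift) and x = (1,…,1), one has ‖Aⁿx‖ ≥ (1+ε)ⁿ‖x‖/√2 for 1 ≤ n ≤ m. -/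
theorem stmt_17 (m : ℕ) (hm : 1 ≤ m) (ε : ℝ) (hε : 0 < ε)
    (S A : Matrix (Fin (2 * m)) (Fin (2 * m)) ℂ)
    (hS : ∀ i j, S i j = if (j : ℕ) = (i : ℕ) + 1 then 1 else 0)
    (hA : A = ((1 - ε : ℝ) : ℂ) • (1 : Matrix (Fin (2 * m)) (Fin (2 * m)) ℂ)
      + ((2 * ε : ℝ) : ℂ) • S)
    (x : EuclideanSpace ℂ (Fin (2 * m))) (hx : ∀ j, x j = 1) :
    ∀ n : ℕ, 1 ≤ n → n ≤ m →
      (1 + ε) ^ n * ‖x‖ / Real.sqrt 2 ≤ ‖Matrix.toEuclideanLin (A ^ n) x‖ := by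
  intro n _ hn
  have key := aux_pow_mulVec m ε S A hS hA x.ofLp hx n
  have hc : (0 : ℝ) ≤ (1 + ε) ^ n := by positivity
  have hxn : ‖x‖ ^ 2 = 2 * m := by
    rw [EuclideanSpace.norm_sq_eq]
    simp [hx]
  have hcard : ∑ i : Fin (2 * m), (if (i : ℕ) < m then ((1 + ε) ^ n) ^ 2 else 0)
      = m * ((1 + ε) ^ n) ^ 2 := by
    rw [← Finset.sum_range (fun i => if i < m then ((1 + ε) ^ n) ^ 2 else 0),
      two_mul, Finset.sum_range_add]
    rw [Finset.sum_congr rfl (g := fun _ => ((1 + ε) ^ n) ^ 2)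
      (fun i hi => if_pos (Finset.mem_range.mp hi))]
    simp
  have hlow : m * ((1 + ε) ^ n) ^ 2 ≤ ‖Matrix.toEuclideanLin (A ^ n) x‖ ^ 2 := by
    rw [EuclideanSpace.norm_sq_eq, ← hcard]
    apply Finset.sum_le_sum
    intro i _
    split_ifs with h
    · have h3 : (Matrix.toEuclideanLin (A ^ n) x) i = (((1 + ε) ^ n : ℝ) : ℂ) :=
        key i (by omega)
      rw [h3, Complex.norm_real, Real.norm_of_nonneg hc]
    · positivity
  refine (pow_le_pow_iff_left₀ (by positivity) (norm_nonneg _) two_ne_zero).mp ?_ 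
  rw [div_pow, mul_pow, hxn, Real.sq_sqrt (by norm_num)]
  linarith
end
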